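/- (Dyadic Littlewood–Paley inequality on the unit square) Let p ∈ (1,∞). There exist constants 0 < c_p ≤ C_p < ∞ such that for every f ∈ L_p([0,1)^2), c_p ‖f‖_{L_p} ≤ ‖S(f)‖_{L_p} ≤ C_p ‖f‖_{L_p}, where S(f) = (Σ_{j ∈ ℕ_{−1}^2} Σ_{m ∈ D_j} 2^{2|j|} ⟨f, h_{j,m}⟩² 1_{I_{j,m}})^{1/2} is the dyadic square function of f. -/

import Mathlib

open MeasureTheory

/-- The real value of a binary digit. -/
noncomputable def bval (b : Bool) : ℝ := if b then 1 else 0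

/-- The two-dimensional digit shifted Hammersley point set with `2^n` points,
indexed by the digit vectors `t : Fin n → Bool`.  The index `i : Fin n`
corresponds to the digit `t_{i+1}` of the paper. -/
noncomputable def hammersleyShifted (n : ℕ) (σ : Fin n → Bool) (t : Fin n → Bool) : ℝ × ℝ :=
  (∑ i : Fin n, bval (t i) / 2 ^ (n - i.val),
   ∑ i : Fin n, bval (t i != σ i) / 2 ^ (i.val + 1))

/-- Number of points of the (indexed) point set `P` lying in `[0,t₁) × [0,t₂)`. -/
noncomputable def countIn {ι : Type*} [Fintype ι] (P : ι → ℝ × ℝ) (t : ℝ × ℝ) : ℕ :=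
  (Finset.univ.filter
    (fun k => 0 ≤ (P k).1 ∧ (P k).1 < t.1 ∧ 0 ≤ (P k).2 ∧ (P k).2 < t.2)).card

/-- The local discrepancy `D_N(P,t) = A_N([0,t),P)/N - t₁t₂` of an indexed point set. -/
noncomputable def localDisc {ι : Type*} [Fintype ι] (P : ι → ℝ × ℝ) (t : ℝ × ℝ) : ℝ :=
  (countIn P t : ℝ) / (Fintype.card ι) - t.1 * t.2

/-- The `L_p`-discrepancy of an indexed point set. -/
noncomputable def LpDisc (p : ℝ) {ι : Type*} [Fintype ι] (P : ι → ℝ × ℝ) : ℝ :=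
  (∫ t in Set.Icc (0 : ℝ × ℝ) 1, |localDisc P t| ^ p) ^ (1 / p)

/-- One-dimensional `L∞`-normalized Haar function `h_{j,m}`, with `j ∈ ℤ`, `j = -1`
giving the indicator of `[0,1)` and `j ≥ 0` the usual Haar function on `I_{j,m}`. -/
noncomputable def haar1 (j : ℤ) (m : ℕ) (x : ℝ) : ℝ :=
  if j = -1 then (if 0 ≤ x ∧ x < 1 then 1 else 0)
  else if (2 * m : ℝ) / 2 ^ (j.toNat + 1) ≤ x ∧ x < (2 * m + 1 : ℝ) / 2 ^ (j.toNat + 1) then 1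
  else if (2 * m + 1 : ℝ) / 2 ^ (j.toNat + 1) ≤ x ∧ x < (2 * m + 2 : ℝ) / 2 ^ (j.toNat + 1) then -1
  else 0

/-- Two-dimensional (tensor product) Haar function. -/
noncomputable def haar2 (j : ℤ × ℤ) (m : ℕ × ℕ) (x : ℝ × ℝ) : ℝ :=
  haar1 j.1 m.1 x.1 * haar1 j.2 m.2 x.2

/-- One-dimensional dyadic interval `I_{j,m}` (with `I_{-1,0} = [0,1)`). -/
noncomputable def dyadicI (j : ℤ) (m : ℕ) : Set ℝ :=
  if j = -1 then Set.Ico (0 : ℝ) 1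
  else Set.Ico ((m : ℝ) / 2 ^ j.toNat) ((m + 1 : ℝ) / 2 ^ j.toNat)

/-- Haar coefficient `μ_{j,m} = ∫_{[0,1]²} D_N(P,t) h_{j,m}(t) dt` of the local
discrepancy of an indexed point set. -/
noncomputable def haarCoeff {ι : Type*} [Fintype ι] (P : ι → ℝ × ℝ) (j : ℤ × ℤ) (m : ℕ × ℕ) : ℝ :=
  ∫ t in Set.Icc (0 : ℝ × ℝ) 1, localDisc P t * haar2 j m t

/-- Number of zero components of the shift `σ`. -/
noncomputable def zeroCount {n : ℕ} (σ : Fin n → Bool) : ℕ :=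
  (Finset.univ.filter (fun j => σ j = false)).card

/-- The symmetrized digit shifted Hammersley point set `R_{n,σ} ∪ R_{n,σ⊕1}`
with `2^(n+1)` points, indexed by `Bool × (Fin n → Bool)`. -/
noncomputable def hammersleySym (n : ℕ) (σ : Fin n → Bool) :
    Bool × (Fin n → Bool) → ℝ × ℝ :=
  fun bt => if bt.1 then hammersleyShifted n (fun i => !(σ i)) bt.2
            else hammersleyShifted n σ bt.2

/-- The multiset `R_{n,σ} ∪ {(x, 1-y) : (x,y) ∈ R_{n,σ}}` with `2^(n+1)` points
(counted with multiplicity), indexed by `Bool × (Fin n → Bool)`. -/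
noncomputable def hammersleySymTilde (n : ℕ) (σ : Fin n → Bool) :
    Bool × (Fin n → Bool) → ℝ × ℝ :=
  fun bt => if bt.1 then ((hammersleyShifted n σ bt.2).1, 1 - (hammersleyShifted n σ bt.2).2)
            else hammersleyShifted n σ bt.2

/-- The dyadic square function `S(f)` on the unit square: indices `k ∈ ℕ²` encode
`j = (k₁ - 1, k₂ - 1) ∈ ℕ_{-1}²`, and for each `j` the inner sum runs over `m ∈ D_j`. -/
noncomputable def sqFn (f : ℝ × ℝ → ℝ) (x : ℝ × ℝ) : ℝ :=
  Real.sqrt (∑' k : ℕ × ℕ,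
    ∑ m1 ∈ Finset.range (2 ^ ((k.1 : ℤ) - 1).toNat),
      ∑ m2 ∈ Finset.range (2 ^ ((k.2 : ℤ) - 1).toNat),
        2 ^ (2 * (((k.1 : ℤ) - 1).toNat + ((k.2 : ℤ) - 1).toNat)) *
          (∫ t in Set.Icc (0 : ℝ × ℝ) 1,
              f t * haar2 ((k.1 : ℤ) - 1, (k.2 : ℤ) - 1) (m1, m2) t) ^ 2 *
          Set.indicator (dyadicI ((k.1 : ℤ) - 1) m1 ×ˢ dyadicI ((k.2 : ℤ) - 1) m2)
            (fun _ => (1 : ℝ)) x)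

/-!
A dyadic martingale with values in a Hilbert space satisfies `‖S‖_p ≤ C ‖f‖_p` by Burkholder's
method: there is a function `U x s` that dominates `s ^ (p / 2) - C * ‖x‖ ^ p`, starts nonpositive,
and decreases in the mean when `x` and `s` are replaced by `x ± d` and `s + ‖d‖ ^ 2`. For `2 ≤ p`
such a function comes from the convexity of `s ^ (p / 2)`, for `p ≤ 2` from the two-point inequality
of Ball, Carlen and Lieb. The reverse inequality follows by duality, testing against the martingale
with terminal value `‖f‖ ^ (p - 2) • f`.

In two parameters, the martingale differences in one variable form a vector whose norm is the square
function in that variable, and this vector is a Hilbert-valued martingale in the other variable, so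
the one-parameter inequalities can be applied twice. They pass from the means of `f` over dyadic
squares to `f` itself by Fatou's lemma, with the Lebesgue differentiation theorem for the lower
bound.
-/

section ScalarInequalities

theorem two_le_rpow_one_add_add_rpow_one_sub {r t : ℝ} (hr : r ≤ 0) (ht : |t| < 1) :
    2 ≤ (1 + t) ^ r + (1 - t) ^ r := by
  obtain ⟨hl, hu⟩ := abs_lt.1 ht
  have hadd : 0 < 1 + t := by linarith
  have hsub : 0 < 1 - t := by linarith
  have hprod : 1 ≤ (1 + t) ^ r * (1 - t) ^ r := by
    rw [← Real.mul_rpow hadd.le hsub.le]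
    exact Real.one_le_rpow_of_pos_of_le_one_of_nonpos (mul_pos hadd hsub)
      (by nlinarith [sq_nonneg t]) hr
  nlinarith [sq_nonneg ((1 + t) ^ r - (1 - t) ^ r), Real.rpow_pos_of_pos hadd r,
    Real.rpow_pos_of_pos hsub r]

theorem two_add_mul_sq_le_rpow_one_add_add_rpow_one_sub {p t : ℝ} (hp : 1 ≤ p) (hp2 : p ≤ 2)
    (ht : |t| ≤ 1) :
    2 + p * (p - 1) * t ^ 2 ≤ (1 + t) ^ p + (1 - t) ^ p := by
  let φ : ℝ → ℝ := fun t => (1 + t) ^ p + (1 - t) ^ p - p * (p - 1) * t ^ 2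
  have hφ : ConvexOn ℝ (Set.Icc (-1) 1) φ := by
    refine convexOn_of_hasDerivWithinAt2_nonneg (convex_Icc _ _) (by fun_prop (disch := linarith))
      (f' := fun t => p * ((1 + t) ^ (p - 1) - (1 - t) ^ (p - 1) - 2 * (p - 1) * t))
      (f'' := fun t => p * ((p - 1) * ((1 + t) ^ (p - 2) + (1 - t) ^ (p - 2) - 2)))
      (fun t _ => ?_) (fun t ht => ?_) (fun t ht => ?_)
    · have h₁ := ((hasDerivAt_id t).const_add 1).rpow_const (p := p) (Or.inr hp)
      have h₂ := ((hasDerivAt_id t).const_sub 1).rpow_const (p := p) (Or.inr hp)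
      refine HasDerivAt.hasDerivWithinAt (((h₁.add h₂).sub
        (((hasDerivAt_id t).pow 2).const_mul (p * (p - 1)))).congr_deriv ?_)
      simp only [id]
      ring
    · rw [interior_Icc] at ht
      have h₁ := ((hasDerivAt_id t).const_add 1).rpow_const (p := p - 1)
        (Or.inl (by simp only [id]; linarith [ht.1]))
      have h₂ := ((hasDerivAt_id t).const_sub 1).rpow_const (p := p - 1)
        (Or.inl (by simp only [id]; linarith [ht.2]))
      refine HasDerivAt.hasDerivWithinAt ((((h₁.sub h₂).sub
        ((hasDerivAt_id t).const_mul (2 * (p - 1)))).const_mul p).congr_deriv ?_)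
      simp only [id]
      ring_nf
    · rw [interior_Icc] at ht
      have hsum := two_le_rpow_one_add_add_rpow_one_sub (sub_nonpos.2 hp2) (abs_lt.2 ht)
      exact mul_nonneg (by linarith) (mul_nonneg (by linarith) (by linarith))
  -- `φ` is convex and even, so it is minimal at `0`.
  have hmin := hφ.2 (abs_le.1 ht) (abs_le.1 ((abs_neg t).trans_le ht))
    one_half_pos.le one_half_pos.le (add_halves 1)
  have hcentre : (1 / 2 : ℝ) • t + (1 / 2 : ℝ) • -t = 0 := by simp
  rw [hcentre] at hmin
  simp only [φ, smul_eq_mul, add_zero, sub_zero, Real.one_rpow, neg_sq, sub_neg_eq_add,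
    ← sub_eq_add_neg] at hmin
  linarith

theorem sq_rpow_half {x : ℝ} (hx : 0 ≤ x) (p : ℝ) : (x ^ 2) ^ (p / 2) = x ^ p := by
  rw [← Real.rpow_natCast_mul hx]
  congr 1
  push_cast
  ring

theorem add_le_add_of_concaveOn_of_abs_le {s : Set ℝ} {f : ℝ → ℝ} {m r ρ : ℝ}
    (hf : ConcaveOn ℝ s f) (hadd : m + ρ ∈ s) (hsub : m - ρ ∈ s) (hr : |r| ≤ ρ) :
    f (m + ρ) + f (m - ρ) ≤ f (m + r) + f (m - r) := by
  obtain rfl | hρ := ((abs_nonneg r).trans hr).eq_or_lt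
  · rw [abs_nonpos_iff.1 hr]
  obtain ⟨hl, hu⟩ := abs_le.1 hr
  -- `m + r` and `m - r` are the convex combinations of `m + ρ`, `m - ρ` with weights `w`, `1 - w`
  -- and `1 - w`, `w`.
  set w := (ρ + r) / (2 * ρ) with hw
  have hw₀ : 0 ≤ w := div_nonneg (by linarith) (by linarith)
  have hw₁ : 0 ≤ 1 - w := sub_nonneg.2 ((div_le_one (by linarith)).2 (by linarith))
  have h₁ := hf.2 hadd hsub hw₀ hw₁ (by ring)
  have h₂ := hf.2 hadd hsub hw₁ hw₀ (by ring)
  have e₁ : w • (m + ρ) + (1 - w) • (m - ρ) = m + r := by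
    simp only [smul_eq_mul, hw]; field_simp; ring
  have e₂ : (1 - w) • (m + ρ) + w • (m - ρ) = m - r := by
    simp only [smul_eq_mul, hw]; field_simp; ring
  rw [e₁] at h₁
  rw [e₂] at h₂
  simp only [smul_eq_mul] at h₁ h₂
  linarith

theorem two_mul_rpow_le_of_abs_le {p a b : ℝ} (hp : 1 ≤ p) (hp2 : p ≤ 2) (hba : |b| ≤ |a|) :
    2 * (a ^ 2 + (p - 1) * b ^ 2) ^ (p / 2) ≤ |a + b| ^ p + |a - b| ^ p := by
  obtain rfl | ha := eq_or_ne a 0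
  · have hb : b = 0 := by simpa using hba
    simp [hb, Real.zero_rpow (show p / 2 ≠ 0 by linarith), Real.zero_rpow (show p ≠ 0 by linarith)]
  obtain ⟨t, rfl⟩ : ∃ t, b = a * t := ⟨b / a, by field_simp⟩
  have ht : |t| ≤ 1 := by
    rwa [abs_mul, mul_le_iff_le_one_right (abs_pos.2 ha)] at hba
  obtain ⟨hl, hu⟩ := abs_le.1 ht
  have hnonneg : 0 ≤ (p - 1) * t ^ 2 := mul_nonneg (by linarith) (sq_nonneg t)
  have hadd : |a + a * t| ^ p = |a| ^ p * (1 + t) ^ p := by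
    rw [← mul_one_add, abs_mul, abs_of_nonneg (by linarith : 0 ≤ 1 + t),
      Real.mul_rpow (abs_nonneg a) (by linarith)]
  have hsub : |a - a * t| ^ p = |a| ^ p * (1 - t) ^ p := by
    rw [← mul_one_sub, abs_mul, abs_of_nonneg (by linarith : 0 ≤ 1 - t),
      Real.mul_rpow (abs_nonneg a) (by linarith)]
  calc 2 * (a ^ 2 + (p - 1) * (a * t) ^ 2) ^ (p / 2)
      = |a| ^ p * (2 * (1 + (p - 1) * t ^ 2) ^ (p / 2)) := by
        rw [show a ^ 2 + (p - 1) * (a * t) ^ 2 = |a| ^ 2 * (1 + (p - 1) * t ^ 2) by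
            rw [sq_abs]; ring,
          Real.mul_rpow (sq_nonneg _) (by linarith), sq_rpow_half (abs_nonneg a)]
        ring
    _ ≤ |a| ^ p * (2 * (1 + p / 2 * ((p - 1) * t ^ 2))) := by
        gcongr
        exact rpow_one_add_le_one_add_mul_self (by linarith) (by linarith) (by linarith)
    _ = |a| ^ p * (2 + p * (p - 1) * t ^ 2) := by ring
    _ ≤ |a| ^ p * ((1 + t) ^ p + (1 - t) ^ p) := by
        gcongr |a| ^ p * ?_
        exact two_add_mul_sq_le_rpow_one_add_add_rpow_one_sub hp hp2 ht
    _ = |a + a * t| ^ p + |a - a * t| ^ p := by rw [hadd, hsub, mul_add]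

theorem two_mul_rpow_le_abs_add_rpow_add_abs_sub_rpow {p : ℝ} (hp : 1 ≤ p) (hp2 : p ≤ 2)
    (a b : ℝ) :
    2 * (a ^ 2 + (p - 1) * b ^ 2) ^ (p / 2) ≤ |a + b| ^ p + |a - b| ^ p := by
  obtain h | h := le_total |b| |a|
  · exact two_mul_rpow_le_of_abs_le hp hp2 h
  have hsq : a ^ 2 ≤ b ^ 2 := sq_le_sq.2 h
  calc 2 * (a ^ 2 + (p - 1) * b ^ 2) ^ (p / 2)
      ≤ 2 * (b ^ 2 + (p - 1) * a ^ 2) ^ (p / 2) := by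
        have : 0 ≤ a ^ 2 + (p - 1) * b ^ 2 := by
          have := mul_nonneg (sub_nonneg.2 hp) (sq_nonneg b)
          positivity
        gcongr 2 * ?_ ^ (p / 2)
        nlinarith
    _ ≤ |b + a| ^ p + |b - a| ^ p := two_mul_rpow_le_of_abs_le hp hp2 h
    _ = |a + b| ^ p + |a - b| ^ p := by rw [add_comm b a, abs_sub_comm b a]

/-- The two-point inequality of Ball, Carlen and Lieb. -/
theorem two_mul_rpow_le_norm_add_rpow_add_norm_sub_rpow {H : Type*} [NormedAddCommGroup H]
    [InnerProductSpace ℝ H] {p : ℝ} (hp : 1 ≤ p) (hp2 : p ≤ 2) (x d : H) :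
    2 * (‖x‖ ^ 2 + (p - 1) * ‖d‖ ^ 2) ^ (p / 2) ≤ ‖x + d‖ ^ p + ‖x - d‖ ^ p := by
  have hspread := add_le_add_of_concaveOn_of_abs_le (m := ‖x‖ ^ 2 + ‖d‖ ^ 2)
    (r := 2 * inner ℝ x d) (ρ := 2 * (‖x‖ * ‖d‖))
    (Real.concaveOn_rpow (p := p / 2) (by linarith) (by linarith))
    (by simp only [Set.mem_Ici]; positivity)
    (by simp only [Set.mem_Ici]; nlinarith [sq_nonneg (‖x‖ - ‖d‖)])
    (by rw [abs_mul, abs_two]; gcongr; exact abs_real_inner_le_norm x d)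
  calc 2 * (‖x‖ ^ 2 + (p - 1) * ‖d‖ ^ 2) ^ (p / 2)
      ≤ |‖x‖ + ‖d‖| ^ p + |‖x‖ - ‖d‖| ^ p :=
        two_mul_rpow_le_abs_add_rpow_add_abs_sub_rpow hp hp2 _ _
    _ = (‖x‖ ^ 2 + ‖d‖ ^ 2 + 2 * (‖x‖ * ‖d‖)) ^ (p / 2)
          + (‖x‖ ^ 2 + ‖d‖ ^ 2 - 2 * (‖x‖ * ‖d‖)) ^ (p / 2) := by
        rw [← sq_rpow_half (abs_nonneg (‖x‖ + ‖d‖)), ← sq_rpow_half (abs_nonneg (‖x‖ - ‖d‖)),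
          sq_abs, sq_abs]
        ring_nf
    _ ≤ (‖x‖ ^ 2 + ‖d‖ ^ 2 + 2 * inner ℝ x d) ^ (p / 2)
          + (‖x‖ ^ 2 + ‖d‖ ^ 2 - 2 * inner ℝ x d) ^ (p / 2) := hspread
    _ = ‖x + d‖ ^ p + ‖x - d‖ ^ p := by
        rw [← sq_rpow_half (norm_nonneg (x + d)), ← sq_rpow_half (norm_nonneg (x - d)),
          norm_add_sq_real, norm_sub_sq_real]
        ring_nf

theorem rpow_sub_one_mul_le_rpow_add_rpow {q s y : ℝ} (hq : 1 ≤ q) (hs : 0 ≤ s) (hy : 0 ≤ y) :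
    s ^ (q - 1) * y ≤ s ^ q + y ^ q := by
  have hpow : ∀ u : ℝ, 0 ≤ u → u ^ (q - 1) * u = u ^ q := fun u hu => by
    rw [← Real.rpow_add_one' hu (by linarith), sub_add_cancel]
  obtain h | h := le_total y s
  · calc s ^ (q - 1) * y ≤ s ^ (q - 1) * s := by gcongr
      _ ≤ s ^ q + y ^ q := by rw [hpow s hs]; linarith [Real.rpow_nonneg hy q]
  · calc s ^ (q - 1) * y ≤ y ^ (q - 1) * y := by gcongr
      _ ≤ s ^ q + y ^ q := by rw [hpow y hy]; linarith [Real.rpow_nonneg hs q]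

theorem rpow_sub_rpow_le_mul_rpow_sub_one {q u v : ℝ} (hq : 1 ≤ q) (hu : 0 ≤ u) (hv : 0 ≤ v) :
    v ^ q - u ^ q ≤ q * v ^ (q - 1) * (v - u) := by
  obtain rfl | hv := hv.eq_or_lt
  · have hmin := Real.rpow_nonneg hu q
    obtain rfl | hq := hq.eq_or_lt
    · simp
    · simpa [Real.zero_rpow (show q ≠ 0 by linarith), Real.zero_rpow (sub_ne_zero.2 hq.ne')]
        using hmin
  have hbern := one_add_mul_self_le_rpow_one_add
    (show -1 ≤ u / v - 1 by have := div_nonneg hu hv.le; linarith) hq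
  rw [add_sub_cancel, Real.div_rpow hu hv.le, le_div_iff₀ (by positivity)] at hbern
  have hpow : v ^ q = v ^ (q - 1) * v := by rw [← Real.rpow_add_one hv.ne', sub_add_cancel]
  have : (1 + q * (u / v - 1)) * v ^ q = v ^ q - q * v ^ (q - 1) * (v - u) := by
    rw [hpow]; field_simp; ring
  linarith

theorem rpow_sub_rpow_le_of_concave {p s X b : ℝ} (hp : 1 < p) (hp2 : p ≤ 2) (hs : 0 ≤ s)
    (hX : 0 ≤ X) (hb : 0 ≤ b) :
    (s + X + 2 * b) ^ (p / 2) - (s + X) ^ (p / 2)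
      ≤ 2 / (p - 1) * ((X + (p - 1) * b) ^ (p / 2) - X ^ (p / 2)) := by
  have hconc := Real.concaveOn_rpow (p := p / 2) (by linarith) (by linarith)
  have hincr : (s + X + 2 * b) ^ (p / 2) + X ^ (p / 2)
      ≤ (s + X) ^ (p / 2) + (X + 2 * b) ^ (p / 2) := by
    have h := add_le_add_of_concaveOn_of_abs_le (m := X + (s + 2 * b) / 2)
      (ρ := (s + 2 * b) / 2) (r := (s - 2 * b) / 2) hconc
      (by simp only [Set.mem_Ici]; linarith) (by simp only [Set.mem_Ici]; linarith)
      (abs_le.2 ⟨by linarith, by linarith⟩)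
    ring_nf at h ⊢
    linarith
  have hchord : (p - 1) / 2 * ((X + 2 * b) ^ (p / 2) - X ^ (p / 2))
      ≤ (X + (p - 1) * b) ^ (p / 2) - X ^ (p / 2) := by
    have h := hconc.2 (x := X + 2 * b) (y := X) (Set.mem_Ici.2 (by linarith)) (Set.mem_Ici.2 hX)
      (show 0 ≤ (p - 1) / 2 by linarith) (show 0 ≤ 1 - (p - 1) / 2 by linarith) (by ring)
    simp only [smul_eq_mul] at h
    rw [show (p - 1) / 2 * (X + 2 * b) + (1 - (p - 1) / 2) * X = X + (p - 1) * b by ring] at h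
    linarith
  rw [div_mul_eq_mul_div, le_div_iff₀ (sub_pos.2 hp)]
  have := mul_le_mul_of_nonneg_left hincr (sub_nonneg.2 hp.le)
  linarith

end ScalarInequalities

section Bellman

variable {H : Type*} [NormedAddCommGroup H]

/-- A Bellman function for the `L^p` square function estimate with constant `C`: the argument `x`
stands for the current value of a martingale and `s` for the sum of its squared increments so far.
By `step` the expectation of `U` decreases along the martingale. -/
structure IsSquareBellman (p C : ℝ) (U : H → ℝ → ℝ) : Prop where
  rpow_le : ∀ x s, 0 ≤ s → s ^ (p / 2) ≤ U x s + C * ‖x‖ ^ p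
  nonpos : ∀ x, U x (‖x‖ ^ 2) ≤ 0
  step : ∀ x d s, 0 ≤ s → U (x + d) (s + ‖d‖ ^ 2) + U (x - d) (s + ‖d‖ ^ 2) ≤ 2 * U x s

variable [InnerProductSpace ℝ H]

theorem isSquareBellman_of_two_le {p : ℝ} (hp : 2 ≤ p) :
    IsSquareBellman p (p ^ (p / 2))
      fun (x : H) s => 2 * (s ^ (p / 2) - p / 2 * s ^ (p / 2 - 1) * ‖x‖ ^ 2) where
  rpow_le x s hs := by
    have h := rpow_sub_one_mul_le_rpow_add_rpow (q := p / 2) (y := p * ‖x‖ ^ 2) (by linarith) hs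
      (by positivity)
    rw [Real.mul_rpow (by linarith) (sq_nonneg _), sq_rpow_half (norm_nonneg x)] at h
    linarith
  nonpos x := by
    have h := rpow_sub_rpow_le_mul_rpow_sub_one (q := p / 2) (v := ‖x‖ ^ 2) (by linarith) le_rfl
      (sq_nonneg _)
    rw [Real.zero_rpow (by linarith)] at h
    linarith
  step x d s hs := by
    have htangent := rpow_sub_rpow_le_mul_rpow_sub_one (q := p / 2) (v := s + ‖d‖ ^ 2)
      (by linarith) hs (by positivity)
    have hmono : s ^ (p / 2 - 1) ≤ (s + ‖d‖ ^ 2) ^ (p / 2 - 1) :=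
      Real.rpow_le_rpow hs (by linarith [sq_nonneg ‖d‖]) (by linarith)
    have hpar : ‖x + d‖ ^ 2 + ‖x - d‖ ^ 2 = 2 * (‖x‖ ^ 2 + ‖d‖ ^ 2) := by
      simpa only [sq] using parallelogram_law_with_norm ℝ x d
    have hscale := mul_le_mul_of_nonneg_left
      (mul_le_mul_of_nonneg_right hmono (sq_nonneg ‖x‖)) (show 0 ≤ 2 * p by linarith)
    linear_combination 4 * htangent + hscale - p * (s + ‖d‖ ^ 2) ^ (p / 2 - 1) * hpar

theorem isSquareBellman_of_le_two {p : ℝ} (hp : 1 < p) (hp2 : p ≤ 2) :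
    IsSquareBellman p (2 / (p - 1))
      fun (x : H) s => (s + ‖x‖ ^ 2) ^ (p / 2) - 2 / (p - 1) * ‖x‖ ^ p where
  rpow_le x s hs := by
    have : s ^ (p / 2) ≤ (s + ‖x‖ ^ 2) ^ (p / 2) := by
      gcongr
      linarith [sq_nonneg ‖x‖]
    linarith
  nonpos x := by
    have h2 : (2 : ℝ) ^ (p / 2) ≤ 2 :=
      Real.rpow_le_self_of_one_le one_le_two (by linarith)
    have hC : 2 ≤ 2 / (p - 1) := by rw [le_div_iff₀ (by linarith)]; linarith
    rw [← two_mul, Real.mul_rpow zero_le_two (sq_nonneg _), sq_rpow_half (norm_nonneg x), ← sub_mul]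
    exact mul_nonpos_of_nonpos_of_nonneg (by linarith) (by positivity)
  step x d s hs := by
    have hconc := Real.concaveOn_rpow (p := p / 2) (by linarith) (by linarith)
    have hpar : ‖x + d‖ ^ 2 + ‖x - d‖ ^ 2 = 2 * (‖x‖ ^ 2 + ‖d‖ ^ 2) := by
      simpa only [sq] using parallelogram_law_with_norm ℝ x d
    have hmid : (s + ‖d‖ ^ 2 + ‖x + d‖ ^ 2) ^ (p / 2) + (s + ‖d‖ ^ 2 + ‖x - d‖ ^ 2) ^ (p / 2)
        ≤ 2 * (s + ‖x‖ ^ 2 + 2 * ‖d‖ ^ 2) ^ (p / 2) := by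
      have h := hconc.2 (x := s + ‖d‖ ^ 2 + ‖x + d‖ ^ 2) (y := s + ‖d‖ ^ 2 + ‖x - d‖ ^ 2)
        (Set.mem_Ici.2 (by positivity)) (Set.mem_Ici.2 (by positivity))
        one_half_pos.le one_half_pos.le (add_halves 1)
      simp only [smul_eq_mul] at h
      rw [show 1 / 2 * (s + ‖d‖ ^ 2 + ‖x + d‖ ^ 2) + 1 / 2 * (s + ‖d‖ ^ 2 + ‖x - d‖ ^ 2)
        = s + ‖x‖ ^ 2 + 2 * ‖d‖ ^ 2 by linear_combination hpar / 2] at h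
      linarith
    have hincr := rpow_sub_rpow_le_of_concave hp hp2 hs (sq_nonneg ‖x‖) (sq_nonneg ‖d‖)
    have hBCL := mul_le_mul_of_nonneg_left
      (two_mul_rpow_le_norm_add_rpow_add_norm_sub_rpow hp.le hp2 x d)
      (div_nonneg zero_le_two (sub_nonneg.2 hp.le))
    rw [← sq_rpow_half (norm_nonneg x)]
    linarith

/-- The constant provided by the Bellman functions; for `p ≤ 1` its value has no meaning. -/
noncomputable def squareConst (p : ℝ) : ℝ :=
  if p ≤ 2 then 2 / (p - 1) else p ^ (p / 2)

theorem squareConst_pos {p : ℝ} (hp : 1 < p) : 0 < squareConst p := by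
  unfold squareConst
  split_ifs
  · exact div_pos two_pos (sub_pos.2 hp)
  · positivity

theorem exists_isSquareBellman {p : ℝ} (hp : 1 < p) :
    ∃ U : H → ℝ → ℝ, IsSquareBellman p (squareConst p) U := by
  unfold squareConst
  split_ifs with hp2
  · exact ⟨_, isSquareBellman_of_le_two hp hp2⟩
  · exact ⟨_, isSquareBellman_of_two_le (le_of_not_ge hp2)⟩

end Bellman

section Duality

theorem le_mul_of_le_rpow_mul_rpow {p q T X C : ℝ} (hpq : p.HolderConjugate q) (hT : 0 ≤ T)
    (hX : 0 ≤ X) (hC : 0 ≤ C) (h : T ≤ X ^ (1 / p) * (C * T) ^ (1 / q)) :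
    T ≤ C ^ (p - 1) * X := by
  obtain rfl | hT' := hT.eq_or_lt
  · positivity
  have hpow : T * T ^ (p - 1) ≤ C ^ (p - 1) * X * T ^ (p - 1) := by
    calc T * T ^ (p - 1) = T ^ p := by
          rw [mul_comm, ← Real.rpow_add_one hT'.ne', sub_add_cancel]
      _ ≤ (X ^ (1 / p) * (C * T) ^ (1 / q)) ^ p := Real.rpow_le_rpow hT h hpq.nonneg
      _ = X * (C * T) ^ (p - 1) := by
          rw [Real.mul_rpow (by positivity) (by positivity), ← Real.rpow_mul hX,
            ← Real.rpow_mul (by positivity), one_div_mul_cancel hpq.ne_zero, Real.rpow_one,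
            one_div_mul_eq_div, hpq.div_conj_eq_sub_one]
      _ = C ^ (p - 1) * X * T ^ (p - 1) := by
          rw [Real.mul_rpow hC hT]
          ring
  exact le_of_mul_le_mul_right hpow (by positivity)

theorem norm_norm_rpow_smul_rpow {H : Type*} [NormedAddCommGroup H] [NormedSpace ℝ H] {p q : ℝ}
    (hpq : p.HolderConjugate q) (x : H) :
    ‖‖x‖ ^ (p - 2) • x‖ ^ q = ‖x‖ ^ p := by
  obtain rfl | hx := eq_or_ne x 0
  · simp [Real.zero_rpow hpq.ne_zero, Real.zero_rpow hpq.symm.ne_zero]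
  rw [norm_smul, Real.norm_of_nonneg (by positivity), ← Real.rpow_add_one (norm_ne_zero_iff.2 hx),
    ← Real.rpow_mul (norm_nonneg x)]
  congr 1
  linarith [hpq.sub_one_mul_conj]

theorem inner_norm_rpow_smul {H : Type*} [NormedAddCommGroup H] [InnerProductSpace ℝ H] {p : ℝ}
    (hp : p ≠ 0) (x : H) :
    inner ℝ x (‖x‖ ^ (p - 2) • x) = ‖x‖ ^ p := by
  obtain rfl | hx := eq_or_ne x 0
  · simp [Real.zero_rpow hp]
  rw [real_inner_smul_right, real_inner_self_eq_norm_sq, ← Real.rpow_natCast,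
    ← Real.rpow_add (norm_pos_iff.2 hx)]
  norm_num

end Duality

section BranchSum

theorem sum_range_two_mul {M : Type*} [AddCommMonoid M] (g : ℕ → M) (N : ℕ) :
    ∑ a ∈ Finset.range (2 * N), g a = ∑ b ∈ Finset.range N, (g (2 * b) + g (2 * b + 1)) := by
  induction N with
  | zero => simp
  | succ N ih => simp only [mul_add_one, Finset.sum_range_succ, ih, add_assoc]

/-- The dyadic intervals of level `n` are numbered by `a < 2 ^ n`, and the parent of the interval
numbered `a` is numbered `a / 2`. The branch sum of `g` adds up the values `g k c` over the interval
`a` of level `n` and all its ancestors. -/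
def branchSum {M : Type*} [AddCommMonoid M] (g : ℕ → ℕ → M) (n a : ℕ) : M :=
  ∑ k ∈ Finset.range (n + 1), g k (a / 2 ^ (n - k))

variable {M : Type*} [AddCommMonoid M] (g : ℕ → ℕ → M)

theorem branchSum_succ (n a : ℕ) : branchSum g (n + 1) a = branchSum g n (a / 2) + g (n + 1) a := by
  rw [branchSum, Finset.sum_range_succ, Nat.sub_self, pow_zero, Nat.div_one]
  congr 1
  refine Finset.sum_congr rfl fun k hk => ?_
  rw [Nat.succ_sub (Finset.mem_range_succ_iff.1 hk), pow_succ', Nat.div_div_eq_div_mul]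

theorem branchSum_succ_two_mul (n b : ℕ) :
    branchSum g (n + 1) (2 * b) = branchSum g n b + g (n + 1) (2 * b) := by
  rw [branchSum_succ, Nat.mul_div_cancel_left b two_pos]

theorem branchSum_succ_two_mul_add_one (n b : ℕ) :
    branchSum g (n + 1) (2 * b + 1) = branchSum g n b + g (n + 1) (2 * b + 1) := by
  rw [branchSum_succ, show (2 * b + 1) / 2 = b by lia]

end BranchSum

section Martingale

variable {V W : Type*} [AddCommGroup V] [Module ℝ V] [AddCommGroup W] [Module ℝ W]

/-- The martingale differences of a family `A k a` indexed by levels `k` and dyadic intervals `a`,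
where level `0` contributes its value. -/
def martDiff {V : Type*} [AddCommGroup V] (A : ℕ → ℕ → V) : ℕ → ℕ → V
  | 0, a => A 0 a
  | k + 1, a => A (k + 1) a - A k (a / 2)

/-- A family indexed by dyadic intervals is a martingale if each of its values is the mean of the
values at the two children. -/
def IsDyadicMartingale (A : ℕ → ℕ → V) : Prop :=
  ∀ k a, A (k + 1) (2 * a) + A (k + 1) (2 * a + 1) = (2 : ℝ) • A k a

theorem martDiff_map (L : V →ₗ[ℝ] W) (A : ℕ → ℕ → V) (k a : ℕ) :
    martDiff (fun k a => L (A k a)) k a = L (martDiff A k a) := by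
  cases k <;> simp [martDiff]

theorem apply_two_mul_eq_add_martDiff {V : Type*} [AddCommGroup V] (A : ℕ → ℕ → V) (k b : ℕ) :
    A (k + 1) (2 * b) = A k b + martDiff A (k + 1) (2 * b) := by
  simp [martDiff]

namespace IsDyadicMartingale

variable {A : ℕ → ℕ → V}

theorem map (hA : IsDyadicMartingale A) (L : V →ₗ[ℝ] W) :
    IsDyadicMartingale fun k a => L (A k a) := fun k a => by
  rw [← map_add, hA, map_smul]

theorem apply_two_mul_add_one (hA : IsDyadicMartingale A) (k b : ℕ) :
    A (k + 1) (2 * b + 1) = A k b - martDiff A (k + 1) (2 * b) := by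
  rw [← add_right_inj (A (k + 1) (2 * b)), hA, two_smul, apply_two_mul_eq_add_martDiff A]
  abel

theorem martDiff_two_mul_add_one (hA : IsDyadicMartingale A) (k b : ℕ) :
    martDiff A (k + 1) (2 * b + 1) = -martDiff A (k + 1) (2 * b) := by
  rw [martDiff, hA.apply_two_mul_add_one, show (2 * b + 1) / 2 = b by lia]
  abel

end IsDyadicMartingale

/-- The mean of `g` over the two children of `a`. -/
noncomputable def dyadicMean (g : ℕ → V) (a : ℕ) : V := (1 / 2 : ℝ) • (g (2 * a) + g (2 * a + 1))

/-- The dyadic martingale with the values `g` at level `n`, and stationary after that level. -/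
noncomputable def martingaleOfTerminal (n : ℕ) (g : ℕ → V) (k a : ℕ) : V :=
  dyadicMean^[n - k] g (a / 2 ^ (k - n))

theorem martingaleOfTerminal_self (n : ℕ) (g : ℕ → V) (a : ℕ) :
    martingaleOfTerminal n g n a = g a := by
  simp [martingaleOfTerminal]

theorem isDyadicMartingale_martingaleOfTerminal (n : ℕ) (g : ℕ → V) :
    IsDyadicMartingale (martingaleOfTerminal n g) := by
  intro k a
  obtain hk | hk := lt_or_ge k n
  · have hiter : dyadicMean^[n - k] g = dyadicMean (dyadicMean^[n - (k + 1)] g) := by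
      rw [← Function.iterate_succ_apply' dyadicMean, show (n - (k + 1)).succ = n - k by lia]
    simp [martingaleOfTerminal, hiter, dyadicMean, smul_smul, Nat.sub_eq_zero_of_le hk,
      Nat.sub_eq_zero_of_le hk.le]
  · have hparent : ∀ c, c / 2 ^ (k + 1 - n) = c / 2 / 2 ^ (k - n) := fun c => by
      rw [Nat.succ_sub hk, pow_succ', Nat.div_div_eq_div_mul]
    simp [martingaleOfTerminal, hparent, Nat.sub_eq_zero_of_le hk,
      Nat.sub_eq_zero_of_le (Nat.le_succ_of_le hk), show (2 * a + 1) / 2 = a by lia, two_smul]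

end Martingale

section SquareFunction

/-- The square of the square function of a dyadic family, at the interval `a` of level `n`. -/
noncomputable def dyadicSq {H : Type*} [NormedAddCommGroup H] (A : ℕ → ℕ → H) (n a : ℕ) : ℝ :=
  branchSum (fun k c => ‖martDiff A k c‖ ^ 2) n a

variable {H : Type*} [NormedAddCommGroup H]

theorem dyadicSq_nonneg (A : ℕ → ℕ → H) (n a : ℕ) : 0 ≤ dyadicSq A n a := by
  unfold dyadicSq branchSum
  positivity

variable {A B : ℕ → ℕ → H}

namespace IsDyadicMartingale

theorem sum_bellman_nonpos [NormedSpace ℝ H] {p C : ℝ} {U : H → ℝ → ℝ} (hU : IsSquareBellman p C U)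
    (hA : IsDyadicMartingale A) (n : ℕ) :
    ∑ a ∈ Finset.range (2 ^ n), U (A n a) (dyadicSq A n a) ≤ 0 := by
  induction n with
  | zero => simpa [dyadicSq, branchSum, martDiff] using hU.nonpos (A 0 0)
  | succ n ih =>
    have hstep : ∀ b, U (A (n + 1) (2 * b)) (dyadicSq A (n + 1) (2 * b))
        + U (A (n + 1) (2 * b + 1)) (dyadicSq A (n + 1) (2 * b + 1))
          ≤ 2 * U (A n b) (dyadicSq A n b) := fun b => by
      rw [dyadicSq, dyadicSq, branchSum_succ_two_mul, branchSum_succ_two_mul_add_one,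
        hA.martDiff_two_mul_add_one, norm_neg, hA.apply_two_mul_add_one,
        apply_two_mul_eq_add_martDiff A]
      exact hU.step _ _ _ (dyadicSq_nonneg A n b)
    rw [pow_succ', sum_range_two_mul]
    refine (Finset.sum_le_sum fun b _ => hstep b).trans ?_
    rw [← Finset.mul_sum]
    linarith

variable [InnerProductSpace ℝ H]

theorem sum_dyadicSq_rpow_le {p : ℝ} (hp : 1 < p) (hA : IsDyadicMartingale A) (n : ℕ) :
    ∑ a ∈ Finset.range (2 ^ n), dyadicSq A n a ^ (p / 2)
      ≤ squareConst p * ∑ a ∈ Finset.range (2 ^ n), ‖A n a‖ ^ p := by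
  obtain ⟨U, hU⟩ := exists_isSquareBellman (H := H) hp
  calc ∑ a ∈ Finset.range (2 ^ n), dyadicSq A n a ^ (p / 2)
      ≤ ∑ a ∈ Finset.range (2 ^ n), (U (A n a) (dyadicSq A n a) + squareConst p * ‖A n a‖ ^ p) :=
        Finset.sum_le_sum fun a _ => hU.rpow_le _ _ (dyadicSq_nonneg A n a)
    _ ≤ squareConst p * ∑ a ∈ Finset.range (2 ^ n), ‖A n a‖ ^ p := by
        rw [Finset.sum_add_distrib, ← Finset.mul_sum]
        linarith [hA.sum_bellman_nonpos hU n]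

theorem sum_inner_eq_sum_branchSum (hA : IsDyadicMartingale A) (hB : IsDyadicMartingale B)
    (n : ℕ) :
    ∑ a ∈ Finset.range (2 ^ n), inner ℝ (A n a) (B n a)
      = ∑ a ∈ Finset.range (2 ^ n),
          branchSum (fun k c => inner ℝ (martDiff A k c) (martDiff B k c)) n a := by
  induction n with
  | zero => simp [branchSum, martDiff]
  | succ n ih =>
    simp only [pow_succ', sum_range_two_mul, branchSum_succ_two_mul, branchSum_succ_two_mul_add_one,
      hA.martDiff_two_mul_add_one, hB.martDiff_two_mul_add_one, hA.apply_two_mul_add_one,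
      hB.apply_two_mul_add_one, apply_two_mul_eq_add_martDiff A, apply_two_mul_eq_add_martDiff B]
    rw [← sub_eq_zero, ← Finset.sum_sub_distrib] at ih ⊢
    rw [← mul_zero 2, ← ih, Finset.mul_sum]
    refine Finset.sum_congr rfl fun b _ => ?_
    simp only [inner_add_left, inner_add_right, inner_sub_left, inner_sub_right, inner_neg_left,
      inner_neg_right]
    ring

theorem sum_norm_rpow_le {p q : ℝ} (hpq : p.HolderConjugate q) (hA : IsDyadicMartingale A)
    (n : ℕ) :
    ∑ a ∈ Finset.range (2 ^ n), ‖A n a‖ ^ p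
      ≤ squareConst q ^ (p - 1) * ∑ a ∈ Finset.range (2 ^ n), dyadicSq A n a ^ (p / 2) := by
  set B := martingaleOfTerminal n fun a => ‖A n a‖ ^ (p - 2) • A n a
  have hB : IsDyadicMartingale B := isDyadicMartingale_martingaleOfTerminal n _
  have hBn : ∀ a, B n a = ‖A n a‖ ^ (p - 2) • A n a := martingaleOfTerminal_self n _
  have hBsq : ∑ a ∈ Finset.range (2 ^ n), dyadicSq B n a ^ (q / 2)
      ≤ squareConst q * ∑ a ∈ Finset.range (2 ^ n), ‖A n a‖ ^ p := by
    simpa only [hBn, norm_norm_rpow_smul_rpow hpq] using hB.sum_dyadicSq_rpow_le hpq.symm.lt n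
  have hA₀ : 0 ≤ ∑ a ∈ Finset.range (2 ^ n), dyadicSq A n a ^ (p / 2) :=
    Finset.sum_nonneg fun a _ => Real.rpow_nonneg (dyadicSq_nonneg A n a) _
  have hB₀ : 0 ≤ ∑ a ∈ Finset.range (2 ^ n), dyadicSq B n a ^ (q / 2) :=
    Finset.sum_nonneg fun a _ => Real.rpow_nonneg (dyadicSq_nonneg B n a) _
  refine le_mul_of_le_rpow_mul_rpow hpq (by positivity) hA₀ (squareConst_pos hpq.symm.lt).le ?_
  calc ∑ a ∈ Finset.range (2 ^ n), ‖A n a‖ ^ p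
      = ∑ a ∈ Finset.range (2 ^ n), inner ℝ (A n a) (B n a) := by
        simp only [hBn, inner_norm_rpow_smul hpq.ne_zero]
    _ = ∑ a ∈ Finset.range (2 ^ n),
          branchSum (fun k c => inner ℝ (martDiff A k c) (martDiff B k c)) n a :=
        hA.sum_inner_eq_sum_branchSum hB n
    _ ≤ ∑ a ∈ Finset.range (2 ^ n), √(dyadicSq A n a) * √(dyadicSq B n a) :=
        Finset.sum_le_sum fun a _ => (Finset.sum_le_sum fun k _ => real_inner_le_norm _ _).trans
          (Real.sum_mul_le_sqrt_mul_sqrt _ _ _)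
    _ ≤ (∑ a ∈ Finset.range (2 ^ n), √(dyadicSq A n a) ^ p) ^ (1 / p)
          * (∑ a ∈ Finset.range (2 ^ n), √(dyadicSq B n a) ^ q) ^ (1 / q) :=
        Real.inner_le_Lp_mul_Lq_of_nonneg _ hpq (fun _ _ => Real.sqrt_nonneg _)
          (fun _ _ => Real.sqrt_nonneg _)
    _ ≤ (∑ a ∈ Finset.range (2 ^ n), dyadicSq A n a ^ (p / 2)) ^ (1 / p)
          * (squareConst q * ∑ a ∈ Finset.range (2 ^ n), ‖A n a‖ ^ p) ^ (1 / q) := by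
        simp only [← Real.rpow_div_two_eq_sqrt _ (dyadicSq_nonneg _ n _)]
        exact mul_le_mul_of_nonneg_left
          (Real.rpow_le_rpow hB₀ hBsq (one_div_nonneg.2 hpq.symm.nonneg)) (Real.rpow_nonneg hA₀ _)

end IsDyadicMartingale

end SquareFunction

section TwoParameter

variable {H : Type*} [NormedAddCommGroup H]

/-- The square of the square function of a two-parameter dyadic family `A k a l b`, at the rectangle
with sides `a` and `b` of level `n`. -/
noncomputable def dyadicSq₂ (A : ℕ → ℕ → ℕ → ℕ → H) (n a b : ℕ) : ℝ :=
  branchSum (fun k c => dyadicSq (martDiff A k c) n b) n a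

theorem dyadicSq₂_nonneg (A : ℕ → ℕ → ℕ → ℕ → H) (n a b : ℕ) : 0 ≤ dyadicSq₂ A n a b := by
  unfold dyadicSq₂ branchSum
  exact Finset.sum_nonneg fun _ _ => dyadicSq_nonneg _ n b

section BranchMap

variable [NormedSpace ℝ H]

/-- The vector of martingale differences along the branch ending in `b`. Its norm is the square
function, so that applying this map in the second variable of a two-parameter martingale gives a
Hilbert space valued martingale in the first variable. -/
noncomputable def branchMap (n b : ℕ) :
    (ℕ → ℕ → H) →ₗ[ℝ] PiLp 2 fun _ : Fin (n + 1) => H where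
  toFun F := WithLp.toLp 2 fun l => martDiff F l (b / 2 ^ (n - (l : ℕ)))
  map_add' F G := by
    ext l
    cases hl : (l : ℕ) <;> simp [martDiff, hl, add_sub_add_comm]
  map_smul' c F := by
    ext l
    cases hl : (l : ℕ) <;> simp [martDiff, hl, smul_sub]

theorem norm_branchMap_sq (n b : ℕ) (F : ℕ → ℕ → H) : ‖branchMap n b F‖ ^ 2 = dyadicSq F n b := by
  rw [PiLp.norm_sq_eq_of_L2, dyadicSq, branchSum, Finset.sum_range]
  rfl

theorem dyadicSq_branchMap (A : ℕ → ℕ → ℕ → ℕ → H) (n a b : ℕ) :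
    dyadicSq (fun k c => branchMap n b (A k c)) n a = dyadicSq₂ A n a b := by
  simp only [dyadicSq, dyadicSq₂, martDiff_map, norm_branchMap_sq]

theorem norm_branchMap_rpow (n b : ℕ) (F : ℕ → ℕ → H) (p : ℝ) :
    ‖branchMap n b F‖ ^ p = dyadicSq F n b ^ (p / 2) := by
  rw [← norm_branchMap_sq, sq_rpow_half (norm_nonneg _)]

end BranchMap

variable [InnerProductSpace ℝ H] {A : ℕ → ℕ → ℕ → ℕ → H}

theorem sum_dyadicSq₂_rpow_le {p : ℝ} (hp : 1 < p) (hA : IsDyadicMartingale A)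
    (hA' : ∀ k a, IsDyadicMartingale (A k a)) (n : ℕ) :
    ∑ a ∈ Finset.range (2 ^ n), ∑ b ∈ Finset.range (2 ^ n), dyadicSq₂ A n a b ^ (p / 2)
      ≤ squareConst p ^ 2
        * ∑ a ∈ Finset.range (2 ^ n), ∑ b ∈ Finset.range (2 ^ n), ‖A n a n b‖ ^ p := by
  calc ∑ a ∈ Finset.range (2 ^ n), ∑ b ∈ Finset.range (2 ^ n), dyadicSq₂ A n a b ^ (p / 2)
      = ∑ b ∈ Finset.range (2 ^ n), ∑ a ∈ Finset.range (2 ^ n),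
          dyadicSq (fun k c => branchMap n b (A k c)) n a ^ (p / 2) := by
        simp only [dyadicSq_branchMap]
        exact Finset.sum_comm
    _ ≤ ∑ b ∈ Finset.range (2 ^ n), squareConst p * ∑ a ∈ Finset.range (2 ^ n),
          ‖branchMap n b (A n a)‖ ^ p :=
        Finset.sum_le_sum fun b _ => (hA.map (branchMap n b)).sum_dyadicSq_rpow_le hp n
    _ = squareConst p * ∑ a ∈ Finset.range (2 ^ n), ∑ b ∈ Finset.range (2 ^ n),
          dyadicSq (A n a) n b ^ (p / 2) := by
        simp only [norm_branchMap_rpow]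
        rw [← Finset.mul_sum, Finset.sum_comm]
    _ ≤ squareConst p * ∑ a ∈ Finset.range (2 ^ n), squareConst p * ∑ b ∈ Finset.range (2 ^ n),
          ‖A n a n b‖ ^ p := by
        gcongr with a
        · exact (squareConst_pos hp).le
        · exact (hA' n a).sum_dyadicSq_rpow_le hp n
    _ = squareConst p ^ 2
          * ∑ a ∈ Finset.range (2 ^ n), ∑ b ∈ Finset.range (2 ^ n), ‖A n a n b‖ ^ p := by
        rw [← Finset.mul_sum, sq, mul_assoc]

theorem sum_norm_rpow_le_sum_dyadicSq₂ {p q : ℝ} (hpq : p.HolderConjugate q)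
    (hA : IsDyadicMartingale A) (hA' : ∀ k a, IsDyadicMartingale (A k a)) (n : ℕ) :
    ∑ a ∈ Finset.range (2 ^ n), ∑ b ∈ Finset.range (2 ^ n), ‖A n a n b‖ ^ p
      ≤ (squareConst q ^ (p - 1)) ^ 2
        * ∑ a ∈ Finset.range (2 ^ n), ∑ b ∈ Finset.range (2 ^ n), dyadicSq₂ A n a b ^ (p / 2) := by
  set K := squareConst q ^ (p - 1)
  have hK : 0 ≤ K := Real.rpow_nonneg (squareConst_pos hpq.symm.lt).le _
  calc ∑ a ∈ Finset.range (2 ^ n), ∑ b ∈ Finset.range (2 ^ n), ‖A n a n b‖ ^ p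
      ≤ ∑ a ∈ Finset.range (2 ^ n), K * ∑ b ∈ Finset.range (2 ^ n),
          dyadicSq (A n a) n b ^ (p / 2) :=
        Finset.sum_le_sum fun a _ => (hA' n a).sum_norm_rpow_le hpq n
    _ = K * ∑ b ∈ Finset.range (2 ^ n), ∑ a ∈ Finset.range (2 ^ n),
          ‖branchMap n b (A n a)‖ ^ p := by
        simp only [norm_branchMap_rpow]
        rw [← Finset.mul_sum, Finset.sum_comm]
    _ ≤ K * ∑ b ∈ Finset.range (2 ^ n), K * ∑ a ∈ Finset.range (2 ^ n),
          dyadicSq (fun k c => branchMap n b (A k c)) n a ^ (p / 2) := by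
        gcongr with b
        exact (hA.map (branchMap n b)).sum_norm_rpow_le hpq n
    _ = K ^ 2 * ∑ a ∈ Finset.range (2 ^ n), ∑ b ∈ Finset.range (2 ^ n),
          dyadicSq₂ A n a b ^ (p / 2) := by
        simp only [dyadicSq_branchMap]
        rw [← Finset.mul_sum, Finset.sum_comm, sq, mul_assoc]

end TwoParameter

section LpEstimates

variable {α : Type*} [MeasurableSpace α] {μ : Measure α} {p : ℝ}

theorem lintegral_le_of_ae_tendsto {F : ℕ → α → ENNReal} {G : α → ENNReal} {K : ENNReal}
    (hF : ∀ n, AEMeasurable (F n) μ)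
    (hlim : ∀ᵐ x ∂μ, Filter.Tendsto (fun n => F n x) Filter.atTop (nhds (G x)))
    (h : ∀ n, ∫⁻ x, F n x ∂μ ≤ K) : ∫⁻ x, G x ∂μ ≤ K :=
  calc ∫⁻ x, G x ∂μ
      = ∫⁻ x, Filter.liminf (fun n => F n x) Filter.atTop ∂μ :=
        lintegral_congr_ae (hlim.mono fun _ hx => hx.liminf_eq.symm)
    _ ≤ Filter.liminf (fun n => ∫⁻ x, F n x ∂μ) Filter.atTop := lintegral_liminf_le' hF
    _ ≤ K := Filter.liminf_le_of_frequently_le' (Filter.Frequently.of_forall h)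

theorem enorm_average_rpow_mul_measure_univ_le {E : Type*} [IsFiniteMeasure μ]
    [NormedAddCommGroup E] [NormedSpace ℝ E] {f : α → E} (hp : 1 ≤ p)
    (hf : AEStronglyMeasurable f μ) :
    ‖⨍ t, f t ∂μ‖ₑ ^ p * μ Set.univ ≤ ∫⁻ t, ‖f t‖ₑ ^ p ∂μ := by
  have hp₀ : 0 < p := zero_lt_one.trans_le hp
  obtain rfl | hμ := eq_or_ne μ 0
  · simp
  have : NeZero μ := ⟨hμ⟩
  set ν := (μ Set.univ)⁻¹ • μ
  have hmean : ‖⨍ t, f t ∂μ‖ₑ ≤ (∫⁻ t, ‖f t‖ₑ ^ p ∂ν) ^ (1 / p) := by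
    calc ‖⨍ t, f t ∂μ‖ₑ ≤ eLpNorm f 1 ν := by
          rw [eLpNorm_one_eq_lintegral_enorm]
          exact enorm_integral_le_lintegral_enorm f
      _ ≤ eLpNorm f (ENNReal.ofReal p) ν :=
          eLpNorm_le_eLpNorm_of_exponent_le (ENNReal.one_le_ofReal.2 hp)
            (hf.mono_ac Measure.smul_absolutelyContinuous)
      _ = (∫⁻ t, ‖f t‖ₑ ^ p ∂ν) ^ (1 / p) := by
          rw [eLpNorm_eq_lintegral_rpow_enorm_toReal (by simpa using hp₀) ENNReal.ofReal_ne_top,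
            ENNReal.toReal_ofReal hp₀.le]
  calc ‖⨍ t, f t ∂μ‖ₑ ^ p * μ Set.univ
      ≤ ((∫⁻ t, ‖f t‖ₑ ^ p ∂ν) ^ (1 / p)) ^ p * μ Set.univ := by gcongr
    _ = ∫⁻ t, ‖f t‖ₑ ^ p ∂μ := by
        rw [← ENNReal.rpow_mul, one_div_mul_cancel hp₀.ne', ENNReal.rpow_one,
          lintegral_smul_measure, smul_eq_mul, mul_comm, ENNReal.mul_inv_cancel_left
            (Measure.measure_univ_ne_zero.2 hμ) (measure_ne_top μ _)]

theorem eLpNorm_le_mul_eLpNorm_of_lintegral_rpow_le {ε ε' : Type*} [ENorm ε] [ENorm ε']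
    {u : α → ε} {v : α → ε'} {K : ℝ} (hp : 0 < p) (hK : 0 ≤ K)
    (h : ∫⁻ x, ‖u x‖ₑ ^ p ∂μ ≤ ENNReal.ofReal K * ∫⁻ x, ‖v x‖ₑ ^ p ∂μ) :
    eLpNorm u (ENNReal.ofReal p) μ
      ≤ ENNReal.ofReal (K ^ (1 / p)) * eLpNorm v (ENNReal.ofReal p) μ := by
  have hp₀ : ENNReal.ofReal p ≠ 0 := (ENNReal.ofReal_pos.2 hp).ne'
  rw [eLpNorm_eq_lintegral_rpow_enorm_toReal hp₀ ENNReal.ofReal_ne_top,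
    eLpNorm_eq_lintegral_rpow_enorm_toReal hp₀ ENNReal.ofReal_ne_top, ENNReal.toReal_ofReal hp.le,
    ← ENNReal.ofReal_rpow_of_nonneg hK (by positivity),
    ← ENNReal.mul_rpow_of_nonneg _ _ (by positivity)]
  gcongr

theorem toReal_eLpNorm_eq_integral_rpow {ε : Type*} [ENorm ε] {u : α → ε} (hp : 0 < p)
    (hu : AEMeasurable (fun x => ‖u x‖ₑ) μ) (hfin : eLpNorm u (ENNReal.ofReal p) μ < ⊤) :
    (eLpNorm u (ENNReal.ofReal p) μ).toReal = (∫ x, ‖u x‖ₑ.toReal ^ p ∂μ) ^ (1 / p) := by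
  have hp₀ : ENNReal.ofReal p ≠ 0 := (ENNReal.ofReal_pos.2 hp).ne'
  rw [eLpNorm_lt_top_iff_lintegral_rpow_enorm_lt_top hp₀ ENNReal.ofReal_ne_top,
    ENNReal.toReal_ofReal hp.le] at hfin
  have hrpow : AEMeasurable (fun x => ‖u x‖ₑ ^ p) μ := hu.pow_const p
  simp only [eLpNorm_eq_lintegral_rpow_enorm_toReal hp₀ ENNReal.ofReal_ne_top,
    ENNReal.toReal_ofReal hp.le, ENNReal.toReal_rpow]
  rw [integral_toReal hrpow (ae_lt_top' hrpow hfin.ne), ENNReal.toReal_rpow]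

end LpEstimates

section DyadicIntervals

/-- The dyadic interval of level `k` numbered `a`. -/
def dyadicIco (k a : ℕ) : Set ℝ := Set.Ico ((a : ℝ) / 2 ^ k) ((a + 1 : ℝ) / 2 ^ k)

/-- The midpoint of the dyadic interval of level `k` numbered `a`. -/
noncomputable def dyadicCenter (k a : ℕ) : ℝ := (a + 1 / 2) / 2 ^ k

/-- The number of the dyadic interval of level `k` containing the point `x ≥ 0`. -/
noncomputable def dyadicIndex (k : ℕ) (x : ℝ) : ℕ := ⌊2 ^ k * x⌋₊

theorem mem_dyadicIco_iff {k a : ℕ} {x : ℝ} :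
    x ∈ dyadicIco k a ↔ (a : ℝ) ≤ 2 ^ k * x ∧ 2 ^ k * x < a + 1 := by
  rw [dyadicIco, Set.mem_Ico, div_le_iff₀' (by positivity), lt_div_iff₀' (by positivity)]

theorem mem_dyadicIco_iff_dyadicIndex_eq {k a : ℕ} {x : ℝ} (hx : 0 ≤ x) :
    x ∈ dyadicIco k a ↔ dyadicIndex k x = a := by
  rw [mem_dyadicIco_iff, dyadicIndex, Nat.floor_eq_iff (by positivity)]

theorem measurableSet_dyadicIco (k a : ℕ) : MeasurableSet (dyadicIco k a) := measurableSet_Ico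

theorem volume_dyadicIco (k a : ℕ) : volume (dyadicIco k a) = (2 ^ k)⁻¹ := by
  rw [dyadicIco, Real.volume_Ico, ← sub_div, add_sub_cancel_left, one_div,
    ENNReal.ofReal_inv_of_pos (by positivity), ENNReal.ofReal_pow zero_le_two, ENNReal.ofReal_ofNat]

theorem dyadicIco_subset_Ico {k a : ℕ} (ha : a < 2 ^ k) : dyadicIco k a ⊆ Set.Ico 0 1 := by
  have ha' : (a + 1 : ℝ) ≤ 2 ^ k := by exact_mod_cast ha
  exact Set.Ico_subset_Ico (by positivity) ((div_le_one (by positivity)).2 ha')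

theorem closedBall_dyadicCenter (k a : ℕ) :
    Metric.closedBall (dyadicCenter k a) ((1 / 2) ^ (k + 1))
      = Set.Icc ((a : ℝ) / 2 ^ k) ((a + 1 : ℝ) / 2 ^ k) := by
  rw [Real.closedBall_eq_Icc, dyadicCenter, one_div_pow, pow_succ]
  congr 1 <;> field_simp <;> ring

theorem dyadicIndex_eq_div {k n : ℕ} (h : k ≤ n) (x : ℝ) :
    dyadicIndex k x = dyadicIndex n x / 2 ^ (n - k) := by
  rw [dyadicIndex, dyadicIndex, ← Nat.floor_div_natCast, ← pow_mul_pow_sub 2 h]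
  congr 1
  push_cast
  field_simp

theorem dyadicIndex_lt {n : ℕ} {x : ℝ} (hx : x ∈ Set.Ico (0 : ℝ) 1) :
    dyadicIndex n x < 2 ^ n := by
  have hpow : (0 : ℝ) < 2 ^ n := by positivity
  rw [dyadicIndex, Nat.floor_lt (mul_nonneg hpow.le hx.1)]
  push_cast
  exact mul_lt_of_lt_one_right hpow hx.2

theorem measurable_dyadicIndex (k : ℕ) : Measurable (dyadicIndex k) :=
  Nat.measurable_floor.comp (measurable_const_mul _)

theorem dyadicI_eq_dyadicIco {k m : ℕ} (hm : m < 2 ^ (k - 1)) :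
    dyadicI ((k : ℤ) - 1) m = dyadicIco (k - 1) m := by
  obtain _ | k := k
  · simp [dyadicI, dyadicIco, show m = 0 by simpa using hm]
  · rw [dyadicI, if_neg (by push_cast; lia), dyadicIco]
    simp

theorem measurableSet_dyadicI (j : ℤ) (m : ℕ) : MeasurableSet (dyadicI j m) := by
  unfold dyadicI
  split_ifs <;> exact measurableSet_Ico

end DyadicIntervals

section HaarFunctions

/-- The density of the uniform distribution on a dyadic interval. -/
noncomputable def dyadicKernel (k a : ℕ) : ℝ → ℝ := (dyadicIco k a).indicator fun _ => 2 ^ k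

theorem measurable_dyadicKernel (k a : ℕ) : Measurable (dyadicKernel k a) :=
  measurable_const.indicator (measurableSet_dyadicIco k a)

theorem norm_dyadicKernel_le (k a : ℕ) (x : ℝ) : ‖dyadicKernel k a x‖ ≤ 2 ^ k :=
  (norm_indicator_le_norm_self _ _).trans_eq (by simp)

theorem dyadicKernel_apply (k a : ℕ) (x : ℝ) :
    dyadicKernel k a x = if (a : ℝ) ≤ 2 ^ k * x ∧ 2 ^ k * x < a + 1 then 2 ^ k else 0 := by
  classical
  rw [dyadicKernel, Set.indicator_apply]
  exact if_congr mem_dyadicIco_iff rfl rfl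

theorem isDyadicMartingale_dyadicKernel : IsDyadicMartingale dyadicKernel := by
  intro k a
  ext x
  simp only [Pi.add_apply, Pi.smul_apply, smul_eq_mul, dyadicKernel_apply]
  push_cast
  rw [pow_succ']
  split_ifs <;> grind

theorem martDiff_dyadicKernel_two_mul (j m : ℕ) (x : ℝ) :
    martDiff dyadicKernel (j + 1) (2 * m) x = 2 ^ j * haar1 j m x := by
  have hpow : (0 : ℝ) < 2 ^ (j + 1) := by positivity
  simp only [martDiff, Pi.sub_apply, haar1, if_neg (show (j : ℤ) ≠ -1 by lia), dyadicKernel_apply,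
    Int.toNat_natCast, div_le_iff₀' hpow, lt_div_iff₀' hpow, Nat.mul_div_cancel_left m two_pos]
  push_cast
  rw [pow_succ']
  split_ifs <;> grind

theorem martDiff_dyadicKernel_eq_or_eq_neg (k : ℕ) {x : ℝ} (hx : x < 1) :
    martDiff dyadicKernel k (dyadicIndex k x)
        = (fun t => 2 ^ (k - 1) * haar1 ((k : ℤ) - 1) (dyadicIndex (k - 1) x) t)
      ∨ martDiff dyadicKernel k (dyadicIndex k x)
        = -(fun t => 2 ^ (k - 1) * haar1 ((k : ℤ) - 1) (dyadicIndex (k - 1) x) t) := by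
  obtain _ | k := k
  · have hindex : dyadicIndex 0 x = 0 := by simpa [dyadicIndex] using hx
    left
    ext t
    simp [martDiff, haar1, dyadicKernel_apply, hindex]
  · have hparent := dyadicIndex_eq_div (Nat.le_succ k) x
    rw [Nat.succ_sub le_rfl, Nat.sub_self, pow_one] at hparent
    rw [Nat.cast_succ, add_sub_cancel_right, Nat.add_sub_cancel, hparent]
    obtain ⟨m, hm | hm⟩ := Nat.even_or_odd' (dyadicIndex (k + 1) x)
    · left
      ext t
      rw [hm, martDiff_dyadicKernel_two_mul, Nat.mul_div_cancel_left m two_pos]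
    · right
      ext t
      rw [hm, isDyadicMartingale_dyadicKernel.martDiff_two_mul_add_one, Pi.neg_apply, Pi.neg_apply,
        martDiff_dyadicKernel_two_mul, show (2 * m + 1) / 2 = m by lia]

end HaarFunctions

section MartingaleIntegral

variable {α E : Type*} [MeasurableSpace α] {μ : Measure α} [NormedAddCommGroup E] [NormedSpace ℝ E]
  {G : ℕ → ℕ → α → E}

theorem integrable_martDiff {E : Type*} [NormedAddCommGroup E] {G : ℕ → ℕ → α → E}
    (hG : ∀ k a, Integrable (G k a) μ) (k a : ℕ) : Integrable (martDiff G k a) μ := by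
  obtain _ | k := k
  · exact hG 0 a
  · exact (hG _ _).sub (hG _ _)

theorem martDiff_integral (hG : ∀ k a, Integrable (G k a) μ) (k a : ℕ) :
    martDiff (fun k a => ∫ t, G k a t ∂μ) k a = ∫ t, martDiff G k a t ∂μ := by
  obtain _ | k := k
  · rfl
  · exact (integral_sub (hG _ _) (hG _ _)).symm

theorem IsDyadicMartingale.integral (hG : IsDyadicMartingale G)
    (hG' : ∀ k a, Integrable (G k a) μ) : IsDyadicMartingale fun k a => ∫ t, G k a t ∂μ := by
  intro k a
  rw [← integral_add (hG' _ _) (hG' _ _), ← integral_smul]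
  exact congrArg (fun u => ∫ t, u t ∂μ) (hG k a)

end MartingaleIntegral

section DyadicCoefficients

/-- The half-open unit square, which the dyadic rectangles of each level partition. -/
def unitSq : Set (ℝ × ℝ) := Set.Ico 0 1 ×ˢ Set.Ico 0 1

theorem measurableSet_unitSq : MeasurableSet unitSq := measurableSet_Ico.prod measurableSet_Ico

theorem restrict_Icc_eq_restrict_unitSq :
    (volume : Measure (ℝ × ℝ)).restrict (Set.Icc 0 1) = volume.restrict unitSq := by
  rw [← Prod.mk_zero_zero, ← Prod.mk_one_one, Set.Icc_prod_eq]
  exact Measure.restrict_congr_set (Measure.set_prod_ae_eq Ico_ae_eq_Icc Ico_ae_eq_Icc).symm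

variable {H : Type*} [NormedAddCommGroup H] [NormedSpace ℝ H] {f : ℝ × ℝ → H}

/-- The function `f` multiplied by the density of the uniform distribution on the dyadic rectangle
with sides `a` of level `k` and `b` of level `l`. -/
noncomputable def dyadicDensity (f : ℝ × ℝ → H) (k a l b : ℕ) (t : ℝ × ℝ) : H :=
  (dyadicKernel k a t.1 * dyadicKernel l b t.2) • f t

/-- The mean of `f` over the dyadic rectangle with sides `a` of level `k` and `b` of level `l`. -/
noncomputable def dyadicCoeff (f : ℝ × ℝ → H) (k a l b : ℕ) : H :=
  ∫ t in unitSq, dyadicDensity f k a l b t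

theorem integrable_dyadicDensity (hf : IntegrableOn f unitSq) (k a l b : ℕ) :
    IntegrableOn (dyadicDensity f k a l b) unitSq := by
  refine hf.bdd_smul (2 ^ k * 2 ^ l) ?_ (.of_forall fun t => ?_)
  · exact (((measurable_dyadicKernel k a).comp measurable_fst).mul
      ((measurable_dyadicKernel l b).comp measurable_snd)).aestronglyMeasurable
  · rw [norm_mul]
    gcongr <;> exact norm_dyadicKernel_le _ _ _

theorem isDyadicMartingale_dyadicDensity_left (f : ℝ × ℝ → H) (l b : ℕ) :
    IsDyadicMartingale fun k a => dyadicDensity f k a l b := fun k a => by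
  ext t
  have hκ := congrFun (isDyadicMartingale_dyadicKernel k a) t.1
  simp only [Pi.add_apply, Pi.smul_apply] at hκ ⊢
  rw [dyadicDensity, dyadicDensity, ← add_smul, ← add_mul, hκ, dyadicDensity, smul_smul,
    smul_eq_mul, mul_assoc]

theorem isDyadicMartingale_dyadicDensity_right (f : ℝ × ℝ → H) (k a : ℕ) :
    IsDyadicMartingale (dyadicDensity f k a) := fun l b => by
  ext t
  have hκ := congrFun (isDyadicMartingale_dyadicKernel l b) t.2
  simp only [Pi.add_apply, Pi.smul_apply] at hκ ⊢
  rw [dyadicDensity, dyadicDensity, ← add_smul, ← mul_add, hκ, dyadicDensity, smul_smul,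
    smul_eq_mul, mul_left_comm]

theorem isDyadicMartingale_dyadicCoeff (hf : IntegrableOn f unitSq) :
    IsDyadicMartingale (dyadicCoeff f) := fun k a => by
  ext l b
  exact (isDyadicMartingale_dyadicDensity_left f l b).integral
    (fun k a => integrable_dyadicDensity hf k a l b) k a

theorem isDyadicMartingale_dyadicCoeff_apply (hf : IntegrableOn f unitSq) (k a : ℕ) :
    IsDyadicMartingale (dyadicCoeff f k a) :=
  (isDyadicMartingale_dyadicDensity_right f k a).integral (integrable_dyadicDensity hf k a)

theorem martDiff_apply_apply {V : Type*} [AddCommGroup V] (A : ℕ → ℕ → ℕ → ℕ → V) (k a l b : ℕ) :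
    martDiff A k a l b = martDiff (fun k a => A k a l b) k a := by
  cases k <;> rfl

theorem martDiff_martDiff_dyadicDensity (f : ℝ × ℝ → H) (k a l b : ℕ) (t : ℝ × ℝ) :
    martDiff (martDiff (dyadicDensity f) k a) l b t
      = (martDiff dyadicKernel k a t.1 * martDiff dyadicKernel l b t.2) • f t := by
  cases k <;> cases l <;> simp [martDiff, dyadicDensity, sub_mul, mul_sub, sub_smul]

theorem martDiff_martDiff_dyadicCoeff (hf : IntegrableOn f unitSq) (k a l b : ℕ) :
    martDiff (martDiff (dyadicCoeff f) k a) l b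
      = ∫ t in unitSq, (martDiff dyadicKernel k a t.1 * martDiff dyadicKernel l b t.2) • f t := by
  have hleft : martDiff (dyadicCoeff f) k a
      = fun l b => ∫ t in unitSq, martDiff (dyadicDensity f) k a l b t := by
    ext l b
    rw [martDiff_apply_apply (dyadicDensity f), martDiff_apply_apply]
    exact martDiff_integral (fun k a => integrable_dyadicDensity hf k a l b) k a
  rw [hleft, martDiff_integral]
  · simp only [martDiff_martDiff_dyadicDensity]
  · intro l b
    rw [martDiff_apply_apply]
    exact integrable_martDiff (fun k a => integrable_dyadicDensity hf k a l b) k a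

theorem enorm_martDiff_martDiff_dyadicCoeff (hf : IntegrableOn f unitSq) (k l : ℕ) {x : ℝ × ℝ}
    (hx : x ∈ unitSq) :
    ‖martDiff (martDiff (dyadicCoeff f) k (dyadicIndex k x.1)) l (dyadicIndex l x.2)‖ₑ
      = 2 ^ ((k - 1) + (l - 1)) * ‖∫ t in unitSq, haar2 ((k : ℤ) - 1, (l : ℤ) - 1)
          (dyadicIndex (k - 1) x.1, dyadicIndex (l - 1) x.2) t • f t‖ₑ := by
  have hscale : ∀ t, (2 ^ (k - 1) * haar1 ((k : ℤ) - 1) (dyadicIndex (k - 1) x.1) t.1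
          * (2 ^ (l - 1) * haar1 ((l : ℤ) - 1) (dyadicIndex (l - 1) x.2) t.2)) • f t
      = (2 ^ ((k - 1) + (l - 1)) : ℝ) • haar2 ((k : ℤ) - 1, (l : ℤ) - 1)
          (dyadicIndex (k - 1) x.1, dyadicIndex (l - 1) x.2) t • f t := fun t => by
    rw [mul_mul_mul_comm, ← pow_add, smul_smul, haar2]
  have hsign : ‖∫ t in unitSq, (martDiff dyadicKernel k (dyadicIndex k x.1) t.1
          * martDiff dyadicKernel l (dyadicIndex l x.2) t.2) • f t‖ₑ
      = ‖∫ t in unitSq, (2 ^ (k - 1) * haar1 ((k : ℤ) - 1) (dyadicIndex (k - 1) x.1) t.1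
          * (2 ^ (l - 1) * haar1 ((l : ℤ) - 1) (dyadicIndex (l - 1) x.2) t.2)) • f t‖ₑ := by
    obtain hk | hk := martDiff_dyadicKernel_eq_or_eq_neg k hx.1.2 <;>
    obtain hl | hl := martDiff_dyadicKernel_eq_or_eq_neg l hx.2.2 <;>
    simp only [hk, hl, Pi.neg_apply, neg_mul, mul_neg, neg_neg, neg_smul, integral_neg, enorm_neg]
  rw [martDiff_martDiff_dyadicCoeff hf, hsign]
  simp only [hscale, integral_smul, enorm_smul, enorm_pow, Real.enorm_eq_ofReal zero_le_two,
    ENNReal.ofReal_ofNat]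

end DyadicCoefficients

section DyadicRectangles

/-- The dyadic rectangle with sides `a` and `b` of level `n`. -/
def dyadicRect (n a b : ℕ) : Set (ℝ × ℝ) := dyadicIco n a ×ˢ dyadicIco n b

theorem measurableSet_dyadicRect (n a b : ℕ) : MeasurableSet (dyadicRect n a b) :=
  (measurableSet_dyadicIco n a).prod (measurableSet_dyadicIco n b)

theorem volume_dyadicRect (n a b : ℕ) : volume (dyadicRect n a b) = (2 ^ n)⁻¹ * (2 ^ n)⁻¹ := by
  rw [dyadicRect, Measure.volume_eq_prod, Measure.prod_prod, volume_dyadicIco, volume_dyadicIco]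

theorem dyadicRect_subset_unitSq {n a b : ℕ} (ha : a < 2 ^ n) (hb : b < 2 ^ n) :
    dyadicRect n a b ⊆ unitSq :=
  Set.prod_mono (dyadicIco_subset_Ico ha) (dyadicIco_subset_Ico hb)

theorem dyadicRect_subset_closedBall (n a b : ℕ) :
    dyadicRect n a b
      ⊆ Metric.closedBall (dyadicCenter n a, dyadicCenter n b) ((1 / 2) ^ (n + 1)) := by
  rw [← closedBall_prod_same, closedBall_dyadicCenter, closedBall_dyadicCenter]
  exact Set.prod_mono Set.Ico_subset_Icc_self Set.Ico_subset_Icc_self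

theorem dyadicRect_ae_eq_closedBall (n a b : ℕ) :
    dyadicRect n a b
      =ᵐ[volume] Metric.closedBall (dyadicCenter n a, dyadicCenter n b) ((1 / 2) ^ (n + 1)) := by
  rw [← closedBall_prod_same, closedBall_dyadicCenter, closedBall_dyadicCenter]
  exact Measure.set_prod_ae_eq Ico_ae_eq_Icc Ico_ae_eq_Icc

theorem mem_dyadicRect_iff {n a b : ℕ} {x : ℝ × ℝ} (hx : x ∈ unitSq) :
    x ∈ dyadicRect n a b ↔ dyadicIndex n x.1 = a ∧ dyadicIndex n x.2 = b :=
  and_congr (mem_dyadicIco_iff_dyadicIndex_eq hx.1.1) (mem_dyadicIco_iff_dyadicIndex_eq hx.2.1)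

theorem unitSq_eq_biUnion_dyadicRect (n : ℕ) :
    unitSq = ⋃ c ∈ Finset.range (2 ^ n) ×ˢ Finset.range (2 ^ n), dyadicRect n c.1 c.2 := by
  refine Set.Subset.antisymm (fun x hx => ?_) (Set.iUnion₂_subset fun c hc => ?_)
  · refine Set.mem_biUnion (x := (dyadicIndex n x.1, dyadicIndex n x.2)) ?_
      ((mem_dyadicRect_iff hx).2 ⟨rfl, rfl⟩)
    simpa using ⟨dyadicIndex_lt hx.1, dyadicIndex_lt hx.2⟩
  · rw [Finset.mem_product, Finset.mem_range, Finset.mem_range] at hc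
    exact dyadicRect_subset_unitSq hc.1 hc.2

theorem lintegral_unitSq_eq_sum (n : ℕ) (G : ℝ × ℝ → ENNReal) :
    ∫⁻ x in unitSq, G x = ∑ a ∈ Finset.range (2 ^ n), ∑ b ∈ Finset.range (2 ^ n),
      ∫⁻ x in dyadicRect n a b, G x := by
  rw [unitSq_eq_biUnion_dyadicRect n, lintegral_biUnion_finset _
    (fun c _ => measurableSet_dyadicRect n c.1 c.2), Finset.sum_product]
  intro c hc d _ hcd
  refine Set.disjoint_left.2 fun x hxc hxd => hcd ?_
  simp only [Finset.coe_product, Finset.coe_range, Set.mem_prod, Set.mem_Iio] at hc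
  have hx := dyadicRect_subset_unitSq hc.1 hc.2 hxc
  obtain ⟨hc₁, hc₂⟩ := (mem_dyadicRect_iff hx).1 hxc
  obtain ⟨hd₁, hd₂⟩ := (mem_dyadicRect_iff hx).1 hxd
  exact Prod.ext (hc₁.symm.trans hd₁) (hc₂.symm.trans hd₂)

theorem setLIntegral_dyadicRect_dyadicIndex {n a b : ℕ} (ha : a < 2 ^ n) (hb : b < 2 ^ n)
    (F : ℕ → ℕ → ENNReal) :
    ∫⁻ x in dyadicRect n a b, F (dyadicIndex n x.1) (dyadicIndex n x.2)
      = F a b * volume (dyadicRect n a b) := by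
  rw [← setLIntegral_const]
  refine setLIntegral_congr_fun (measurableSet_dyadicRect n a b) fun x hx => ?_
  obtain ⟨hx₁, hx₂⟩ := (mem_dyadicRect_iff (dyadicRect_subset_unitSq ha hb hx)).1 hx
  simp only [hx₁, hx₂]

theorem lintegral_ofReal_dyadicIndex (n : ℕ) {F : ℕ → ℕ → ℝ} (hF : ∀ a b, 0 ≤ F a b) :
    ∫⁻ x in unitSq, ENNReal.ofReal (F (dyadicIndex n x.1) (dyadicIndex n x.2))
      = ENNReal.ofReal (∑ a ∈ Finset.range (2 ^ n), ∑ b ∈ Finset.range (2 ^ n), F a b)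
        * ((2 ^ n)⁻¹ * (2 ^ n)⁻¹) := by
  rw [lintegral_unitSq_eq_sum n,
    ENNReal.ofReal_sum_of_nonneg fun a _ => Finset.sum_nonneg fun b _ => hF a b, Finset.sum_mul]
  refine Finset.sum_congr rfl fun a ha => ?_
  rw [ENNReal.ofReal_sum_of_nonneg fun b _ => hF a b, Finset.sum_mul]
  refine Finset.sum_congr rfl fun b hb => ?_
  rw [← volume_dyadicRect n a b]
  exact setLIntegral_dyadicRect_dyadicIndex (Finset.mem_range.1 ha) (Finset.mem_range.1 hb)
    fun a b => ENNReal.ofReal (F a b)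

theorem lintegral_ofReal_dyadicIndex_le {n : ℕ} {F G : ℕ → ℕ → ℝ} {K : ℝ} (hK : 0 ≤ K)
    (hF : ∀ a b, 0 ≤ F a b) (hG : ∀ a b, 0 ≤ G a b)
    (h : ∑ a ∈ Finset.range (2 ^ n), ∑ b ∈ Finset.range (2 ^ n), F a b
      ≤ K * ∑ a ∈ Finset.range (2 ^ n), ∑ b ∈ Finset.range (2 ^ n), G a b) :
    ∫⁻ x in unitSq, ENNReal.ofReal (F (dyadicIndex n x.1) (dyadicIndex n x.2))
      ≤ ENNReal.ofReal K
        * ∫⁻ x in unitSq, ENNReal.ofReal (G (dyadicIndex n x.1) (dyadicIndex n x.2)) := by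
  rw [lintegral_ofReal_dyadicIndex n hF, lintegral_ofReal_dyadicIndex n hG,
    ← mul_assoc (ENNReal.ofReal K), ← ENNReal.ofReal_mul hK]
  gcongr

theorem measurable_comp_dyadicIndex {β : Type*} [MeasurableSpace β] (k l : ℕ) (F : ℕ → ℕ → β) :
    Measurable fun x : ℝ × ℝ => F (dyadicIndex k x.1) (dyadicIndex l x.2) :=
  (Measurable.of_discrete (f := fun c : ℕ × ℕ => F c.1 c.2)).comp
    (((measurable_dyadicIndex k).comp measurable_fst).prodMk
      ((measurable_dyadicIndex l).comp measurable_snd))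

end DyadicRectangles

section DyadicAverages

variable {H : Type*} [NormedAddCommGroup H] [NormedSpace ℝ H] {f : ℝ × ℝ → H}

theorem dyadicCoeff_eq_average (f : ℝ × ℝ → H) {n a b : ℕ} (ha : a < 2 ^ n) (hb : b < 2 ^ n) :
    dyadicCoeff f n a n b = ⨍ t in dyadicRect n a b, f t := by
  have hdensity : dyadicDensity f n a n b
      = (dyadicRect n a b).indicator fun t => (2 ^ n * 2 ^ n : ℝ) • f t := by
    classical
    ext t
    simp only [dyadicDensity, dyadicKernel, dyadicRect, Set.indicator_apply, Set.mem_prod]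
    split_ifs <;> simp_all
  rw [dyadicCoeff, hdensity, setIntegral_indicator (measurableSet_dyadicRect n a b),
    Set.inter_eq_self_of_subset_right (dyadicRect_subset_unitSq ha hb), integral_smul,
    setAverage_eq, measureReal_def, volume_dyadicRect]
  simp

theorem lintegral_norm_dyadicCoeff_rpow_le (hf : IntegrableOn f unitSq) {p : ℝ} (hp : 1 ≤ p)
    (n : ℕ) :
    ∫⁻ x in unitSq, ENNReal.ofReal
        (‖dyadicCoeff f n (dyadicIndex n x.1) n (dyadicIndex n x.2)‖ ^ p)
      ≤ ∫⁻ x in unitSq, ‖f x‖ₑ ^ p := by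
  rw [lintegral_unitSq_eq_sum n, lintegral_unitSq_eq_sum n]
  refine Finset.sum_le_sum fun a ha => Finset.sum_le_sum fun b hb => ?_
  rw [Finset.mem_range] at ha hb
  have hvol : volume (dyadicRect n a b) < ⊤ := by
    rw [volume_dyadicRect]
    finiteness
  have : IsFiniteMeasure (volume.restrict (dyadicRect n a b)) := isFiniteMeasure_restrict.2 hvol.ne
  rw [setLIntegral_dyadicRect_dyadicIndex ha hb
      fun a b => ENNReal.ofReal (‖dyadicCoeff f n a n b‖ ^ p),
    ← ENNReal.ofReal_rpow_of_nonneg (norm_nonneg _) (by linarith), ofReal_norm,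
    dyadicCoeff_eq_average f ha hb, ← Measure.restrict_apply_univ]
  exact enorm_average_rpow_mul_measure_univ_le hp
    (hf.mono_set (dyadicRect_subset_unitSq ha hb)).aestronglyMeasurable

theorem ae_tendsto_dyadicCoeff [CompleteSpace H] (hf : IntegrableOn f unitSq) :
    ∀ᵐ x ∂volume.restrict unitSq, Filter.Tendsto
      (fun n => dyadicCoeff f n (dyadicIndex n x.1) n (dyadicIndex n x.2)) Filter.atTop
      (nhds (f x)) := by
  have hloc : LocallyIntegrable (unitSq.indicator f) :=
    (hf.integrable_indicator measurableSet_unitSq).locallyIntegrable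
  rw [ae_restrict_iff' measurableSet_unitSq]
  filter_upwards [IsUnifLocDoublingMeasure.ae_tendsto_average volume hloc 1] with x hx hxU
  have hradius : Filter.Tendsto (fun n => (1 / 2 : ℝ) ^ (n + 1)) Filter.atTop
      (nhdsWithin 0 (Set.Ioi 0)) :=
    tendsto_nhdsWithin_iff.2 ⟨(tendsto_pow_atTop_nhds_zero_of_lt_one (by norm_num)
      (by norm_num)).comp (Filter.tendsto_add_atTop_nat 1), .of_forall fun n => by simp⟩
  have hlim := hx
    (fun n => (dyadicCenter n (dyadicIndex n x.1), dyadicCenter n (dyadicIndex n x.2)))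
    (fun n => (1 / 2 : ℝ) ^ (n + 1)) hradius <| .of_forall fun n => by
      rw [one_mul]
      exact dyadicRect_subset_closedBall n _ _ ((mem_dyadicRect_iff hxU).2 ⟨rfl, rfl⟩)
  rw [Set.indicator_of_mem hxU] at hlim
  refine hlim.congr fun n => ?_
  have ha := dyadicIndex_lt (n := n) hxU.1
  have hb := dyadicIndex_lt (n := n) hxU.2
  rw [dyadicCoeff_eq_average f ha hb, ← setAverage_congr (dyadicRect_ae_eq_closedBall n _ _)]
  exact setAverage_congr_fun (measurableSet_dyadicRect n _ _) <| .of_forall fun t ht =>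
    Set.indicator_of_mem (dyadicRect_subset_unitSq ha hb ht) f

end DyadicAverages

section SquareFunctionOnSquare

variable {H : Type*} [NormedAddCommGroup H] [NormedSpace ℝ H]

/-- The dyadic square function of a vector valued function, with the indexing of `sqFn`. It takes
extended values, so that a divergent series does not have the junk value `0`. -/
noncomputable def eSqFn (f : ℝ × ℝ → H) (x : ℝ × ℝ) : ENNReal :=
  (∑' k : ℕ × ℕ, ∑ m₁ ∈ Finset.range (2 ^ (k.1 - 1)), ∑ m₂ ∈ Finset.range (2 ^ (k.2 - 1)),
    2 ^ (2 * ((k.1 - 1) + (k.2 - 1)))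
      * ‖∫ t in Set.Icc (0 : ℝ × ℝ) 1, haar2 ((k.1 : ℤ) - 1, (k.2 : ℤ) - 1) (m₁, m₂) t • f t‖ₑ ^ 2
      * (dyadicI ((k.1 : ℤ) - 1) m₁ ×ˢ dyadicI ((k.2 : ℤ) - 1) m₂).indicator 1 x) ^ (1 / 2 : ℝ)

theorem measurable_eSqFn (f : ℝ × ℝ → H) : Measurable (eSqFn f) := by
  refine (Measurable.tsum fun k => ?_).pow_const _
  refine Finset.measurable_fun_sum _ fun m₁ _ => Finset.measurable_fun_sum _ fun m₂ _ => ?_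
  exact (measurable_one.indicator
    ((measurableSet_dyadicI _ m₁).prod (measurableSet_dyadicI _ m₂))).const_mul _

theorem toReal_eSqFn (f : ℝ × ℝ → ℝ) (x : ℝ × ℝ) : (eSqFn f x).toReal = sqFn f x := by
  have hind : ∀ s : Set (ℝ × ℝ), s.indicator (1 : ℝ × ℝ → ENNReal) x
      = ENNReal.ofReal (s.indicator (fun _ => (1 : ℝ)) x) := fun s => by
    by_cases hxs : x ∈ s <;> simp [hxs]
  have hind₀ : ∀ s : Set (ℝ × ℝ), 0 ≤ s.indicator (fun _ => (1 : ℝ)) x := fun s =>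
    Set.indicator_nonneg (fun _ _ => zero_le_one) x
  simp only [eSqFn, hind, ← ENNReal.toReal_rpow, sqFn, Real.sqrt_eq_rpow]
  rw [ENNReal.tsum_toReal_eq fun k => ENNReal.sum_ne_top.2 fun _ _ => ENNReal.sum_ne_top.2
    fun _ _ => by finiteness]
  congr 1
  refine tsum_congr fun k => ?_
  simp only [Int.pred_toNat, Int.toNat_natCast]
  rw [ENNReal.toReal_sum fun _ _ => ENNReal.sum_ne_top.2 fun _ _ => by finiteness]
  refine Finset.sum_congr rfl fun m₁ _ => ?_
  rw [ENNReal.toReal_sum fun _ _ => by finiteness]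
  refine Finset.sum_congr rfl fun m₂ _ => ?_
  simp only [ENNReal.toReal_mul, ENNReal.toReal_pow, toReal_enorm, ENNReal.toReal_ofNat,
    ENNReal.toReal_ofReal (hind₀ _), Real.norm_eq_abs, sq_abs, smul_eq_mul, mul_comm (f _)]

/-- The contribution of the levels `k` to the square of the square function at `x`. -/
noncomputable def sqTerm (f : ℝ × ℝ → H) (k : ℕ × ℕ) (x : ℝ × ℝ) : ENNReal :=
  ‖martDiff (martDiff (dyadicCoeff f) k.1 (dyadicIndex k.1 x.1)) k.2 (dyadicIndex k.2 x.2)‖ₑ ^ 2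

theorem indicator_dyadicI {k m : ℕ} (hm : m < 2 ^ (k - 1)) {x : ℝ} (hx : x ∈ Set.Ico (0 : ℝ) 1) :
    (dyadicI ((k : ℤ) - 1) m).indicator (1 : ℝ → ENNReal) x
      = if dyadicIndex (k - 1) x = m then 1 else 0 := by
  classical
  rw [Set.indicator_apply, dyadicI_eq_dyadicIco hm]
  exact if_congr (mem_dyadicIco_iff_dyadicIndex_eq hx.1) rfl rfl

theorem sum_mul_indicator_dyadicI (g : ℕ → ENNReal) (k : ℕ) {x : ℝ} (hx : x ∈ Set.Ico (0 : ℝ) 1) :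
    ∑ m ∈ Finset.range (2 ^ (k - 1)), g m * (dyadicI ((k : ℤ) - 1) m).indicator 1 x
      = g (dyadicIndex (k - 1) x) := by
  calc ∑ m ∈ Finset.range (2 ^ (k - 1)), g m * (dyadicI ((k : ℤ) - 1) m).indicator 1 x
      = ∑ m ∈ Finset.range (2 ^ (k - 1)), if dyadicIndex (k - 1) x = m then g m else 0 :=
        Finset.sum_congr rfl fun m hm => by
          rw [indicator_dyadicI (Finset.mem_range.1 hm) hx, mul_ite, mul_one, mul_zero]
    _ = g (dyadicIndex (k - 1) x) := by
        rw [Finset.sum_ite_eq, if_pos (Finset.mem_range.2 (dyadicIndex_lt hx))]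

theorem eSqFn_eq_tsum_sqTerm {f : ℝ × ℝ → H} (hf : IntegrableOn f unitSq) {x : ℝ × ℝ}
    (hx : x ∈ unitSq) : eSqFn f x = (∑' k, sqTerm f k x) ^ (1 / 2 : ℝ) := by
  obtain ⟨x₁, x₂⟩ := x
  rw [eSqFn]
  congr 1
  refine tsum_congr fun k => ?_
  simp only [Set.indicator_prod_one, mul_comm (Set.indicator (dyadicI ((k.1 : ℤ) - 1) _) 1 x₁),
    ← mul_assoc, ← Finset.sum_mul, sum_mul_indicator_dyadicI _ _ hx.1,
    sum_mul_indicator_dyadicI _ _ hx.2]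
  rw [sqTerm, enorm_martDiff_martDiff_dyadicCoeff hf _ _ hx, mul_pow, ← pow_mul,
    restrict_Icc_eq_restrict_unitSq, mul_comm 2]

theorem lintegral_eSqFn_rpow {f : ℝ × ℝ → H} (hf : IntegrableOn f unitSq) (p : ℝ) :
    ∫⁻ x in unitSq, eSqFn f x ^ p = ∫⁻ x in unitSq, (∑' k, sqTerm f k x) ^ (p / 2) :=
  setLIntegral_congr_fun measurableSet_unitSq fun x hx => by
    simp only [eSqFn_eq_tsum_sqTerm hf hx, ← ENNReal.rpow_mul, one_div_mul_eq_div]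

theorem ofReal_dyadicSq₂_dyadicCoeff (f : ℝ × ℝ → H) (n : ℕ) (x : ℝ × ℝ) :
    ENNReal.ofReal (dyadicSq₂ (dyadicCoeff f) n (dyadicIndex n x.1) (dyadicIndex n x.2))
      = ∑ k ∈ Finset.range (n + 1) ×ˢ Finset.range (n + 1), sqTerm f k x := by
  have hsq : ∀ v : H, ENNReal.ofReal (‖v‖ ^ 2) = ‖v‖ₑ ^ 2 := fun v => by
    rw [ENNReal.ofReal_pow (norm_nonneg v), ofReal_norm]
  unfold dyadicSq₂ dyadicSq branchSum
  rw [Finset.sum_product, ENNReal.ofReal_sum_of_nonneg fun k _ => by positivity]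
  refine Finset.sum_congr rfl fun k hk => ?_
  rw [ENNReal.ofReal_sum_of_nonneg fun l _ => by positivity]
  refine Finset.sum_congr rfl fun l hl => ?_
  rw [sqTerm, hsq, dyadicIndex_eq_div (Finset.mem_range_succ_iff.1 hk),
    dyadicIndex_eq_div (Finset.mem_range_succ_iff.1 hl)]

theorem tendsto_dyadicSq₂_dyadicCoeff (f : ℝ × ℝ → H) (x : ℝ × ℝ) :
    Filter.Tendsto (fun n => ENNReal.ofReal
        (dyadicSq₂ (dyadicCoeff f) n (dyadicIndex n x.1) (dyadicIndex n x.2)))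
      Filter.atTop (nhds (∑' k, sqTerm f k x)) := by
  simp only [ofReal_dyadicSq₂_dyadicCoeff]
  refine ENNReal.summable.hasSum.comp (Filter.tendsto_atTop_finset_of_monotone
    (f := fun n => Finset.range (n + 1) ×ˢ Finset.range (n + 1)) (fun m n h => ?_) fun k => ?_)
  · exact Finset.product_subset_product (Finset.range_mono (by lia)) (Finset.range_mono (by lia))
  · exact ⟨k.1 + k.2, by simp⟩

end SquareFunctionOnSquare

section LittlewoodPaley

variable {H : Type*} [NormedAddCommGroup H] [InnerProductSpace ℝ H] {f : ℝ × ℝ → H} {p q : ℝ}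

theorem lintegral_eSqFn_rpow_le (hp : 1 < p) (hf : IntegrableOn f unitSq) :
    ∫⁻ x in unitSq, eSqFn f x ^ p
      ≤ ENNReal.ofReal (squareConst p ^ 2) * ∫⁻ x in unitSq, ‖f x‖ₑ ^ p := by
  rw [lintegral_eSqFn_rpow hf]
  refine lintegral_le_of_ae_tendsto
    (F := fun n x => ENNReal.ofReal
      (dyadicSq₂ (dyadicCoeff f) n (dyadicIndex n x.1) (dyadicIndex n x.2) ^ (p / 2)))
    (fun n => (measurable_comp_dyadicIndex n n fun a b =>
      ENNReal.ofReal (dyadicSq₂ (dyadicCoeff f) n a b ^ (p / 2))).aemeasurable)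
    (.of_forall fun x => ?_) fun n => ?_
  · simp only [← ENNReal.ofReal_rpow_of_nonneg (dyadicSq₂_nonneg _ _ _ _)
      (show 0 ≤ p / 2 by linarith)]
    exact (ENNReal.continuous_rpow_const.tendsto _).comp (tendsto_dyadicSq₂_dyadicCoeff f x)
  · refine (lintegral_ofReal_dyadicIndex_le (sq_nonneg _)
      (fun a b => Real.rpow_nonneg (dyadicSq₂_nonneg _ _ a b) _)
      (fun a b => Real.rpow_nonneg (norm_nonneg (dyadicCoeff f n a n b)) p)
      (sum_dyadicSq₂_rpow_le hp (isDyadicMartingale_dyadicCoeff hf)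
        (isDyadicMartingale_dyadicCoeff_apply hf) n)).trans ?_
    gcongr _ * ?_
    exact lintegral_norm_dyadicCoeff_rpow_le hf hp.le n

theorem lintegral_enorm_rpow_le_lintegral_eSqFn_rpow [CompleteSpace H] (hpq : p.HolderConjugate q)
    (hf : IntegrableOn f unitSq) :
    ∫⁻ x in unitSq, ‖f x‖ₑ ^ p
      ≤ ENNReal.ofReal ((squareConst q ^ (p - 1)) ^ 2) * ∫⁻ x in unitSq, eSqFn f x ^ p := by
  rw [lintegral_eSqFn_rpow hf]
  refine lintegral_le_of_ae_tendsto
    (F := fun n x => ENNReal.ofReal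
      (‖dyadicCoeff f n (dyadicIndex n x.1) n (dyadicIndex n x.2)‖ ^ p))
    (fun n => (measurable_comp_dyadicIndex n n fun a b =>
      ENNReal.ofReal (‖dyadicCoeff f n a n b‖ ^ p)).aemeasurable) ?_ fun n => ?_
  · filter_upwards [ae_tendsto_dyadicCoeff hf] with x hx
    simp only [← ENNReal.ofReal_rpow_of_nonneg (norm_nonneg _) hpq.nonneg, ofReal_norm]
    exact (ENNReal.continuous_rpow_const.tendsto _).comp hx.enorm
  · refine (lintegral_ofReal_dyadicIndex_le (sq_nonneg _)
      (fun a b => Real.rpow_nonneg (norm_nonneg (dyadicCoeff f n a n b)) p)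
      (fun a b => Real.rpow_nonneg (dyadicSq₂_nonneg _ _ a b) _)
      (sum_norm_rpow_le_sum_dyadicSq₂ hpq (isDyadicMartingale_dyadicCoeff hf)
        (isDyadicMartingale_dyadicCoeff_apply hf) n)).trans ?_
    gcongr with x
    rw [← ENNReal.ofReal_rpow_of_nonneg (dyadicSq₂_nonneg _ _ _ _) (half_pos hpq.pos).le,
      ofReal_dyadicSq₂_dyadicCoeff]
    exact ENNReal.rpow_le_rpow (ENNReal.sum_le_tsum _) (half_pos hpq.pos).le

theorem statement11_general {H : Type*} [NormedAddCommGroup H] [InnerProductSpace ℝ H]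
    [CompleteSpace H] (p : ℝ) (hp : 1 < p) :
    ∃ c C : ℝ, 0 < c ∧ c ≤ C ∧ ∀ f : ℝ × ℝ → H, IntegrableOn f (Set.Icc 0 1) →
      ENNReal.ofReal c * eLpNorm f (ENNReal.ofReal p) (volume.restrict (Set.Icc 0 1))
          ≤ eLpNorm (eSqFn f) (ENNReal.ofReal p) (volume.restrict (Set.Icc 0 1)) ∧
      eLpNorm (eSqFn f) (ENNReal.ofReal p) (volume.restrict (Set.Icc 0 1))
          ≤ ENNReal.ofReal C
            * eLpNorm f (ENNReal.ofReal p) (volume.restrict (Set.Icc 0 1)) := by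
  have hpq := Real.HolderConjugate.conjExponent hp
  set b := ((squareConst p.conjExponent ^ (p - 1)) ^ 2) ^ (1 / p)
  set B := (squareConst p ^ 2) ^ (1 / p)
  have hb : 0 < b := by
    have := squareConst_pos hpq.symm.lt
    positivity
  refine ⟨b⁻¹, max b⁻¹ B, inv_pos.2 hb, le_max_left _ _, fun f hf => ?_⟩
  rw [IntegrableOn, restrict_Icc_eq_restrict_unitSq] at hf
  rw [restrict_Icc_eq_restrict_unitSq]
  constructor
  · rw [ENNReal.ofReal_inv_of_pos hb, mul_comm, ← div_eq_mul_inv]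
    exact ENNReal.div_le_of_le_mul' (eLpNorm_le_mul_eLpNorm_of_lintegral_rpow_le hpq.pos
      (sq_nonneg _) (lintegral_enorm_rpow_le_lintegral_eSqFn_rpow hpq hf))
  · calc eLpNorm (eSqFn f) (ENNReal.ofReal p) (volume.restrict unitSq)
        ≤ ENNReal.ofReal B * eLpNorm f (ENNReal.ofReal p) (volume.restrict unitSq) :=
          eLpNorm_le_mul_eLpNorm_of_lintegral_rpow_le hpq.pos (sq_nonneg _)
            (lintegral_eSqFn_rpow_le hp hf)
      _ ≤ _ := by
          gcongr
          exact le_max_right _ _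

theorem integral_sqFn_rpow_bounds_of_eLpNorm_eSqFn {μ : Measure (ℝ × ℝ)} {f : ℝ × ℝ → ℝ} {c C : ℝ}
    (hp : 0 < p) (hc : 0 ≤ c) (hC : 0 ≤ C) (hf : MemLp f (ENNReal.ofReal p) μ)
    (h : ENNReal.ofReal c * eLpNorm f (ENNReal.ofReal p) μ
          ≤ eLpNorm (eSqFn f) (ENNReal.ofReal p) μ ∧
        eLpNorm (eSqFn f) (ENNReal.ofReal p) μ
          ≤ ENNReal.ofReal C * eLpNorm f (ENNReal.ofReal p) μ) :
    c * (∫ t, |f t| ^ p ∂μ) ^ (1 / p) ≤ (∫ t, sqFn f t ^ p ∂μ) ^ (1 / p) ∧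
      (∫ t, sqFn f t ^ p ∂μ) ^ (1 / p) ≤ C * (∫ t, |f t| ^ p ∂μ) ^ (1 / p) := by
  have hbound : ENNReal.ofReal C * eLpNorm f (ENNReal.ofReal p) μ < ⊤ :=
    ENNReal.mul_lt_top ENNReal.ofReal_lt_top hf.eLpNorm_lt_top
  have hsq : eLpNorm (eSqFn f) (ENNReal.ofReal p) μ < ⊤ := h.2.trans_lt hbound
  have hnorm_f := toReal_eLpNorm_eq_integral_rpow hp hf.aestronglyMeasurable.enorm hf.eLpNorm_lt_top
  have hnorm_sq := toReal_eLpNorm_eq_integral_rpow hp (measurable_eSqFn f).enorm.aemeasurable hsq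
  simp only [toReal_enorm, Real.norm_eq_abs] at hnorm_f
  simp only [enorm_eq_self, toReal_eSqFn] at hnorm_sq
  rw [← hnorm_f, ← hnorm_sq, ← ENNReal.toReal_ofReal_mul _ _ hc, ← ENNReal.toReal_ofReal_mul _ _ hC]
  exact ⟨ENNReal.toReal_mono hsq.ne h.1, ENNReal.toReal_mono hbound.ne h.2⟩

end LittlewoodPaley

/-- Dyadic Littlewood–Paley inequality on the unit square:
`c_p ‖f‖_{L_p} ≤ ‖S(f)‖_{L_p} ≤ C_p ‖f‖_{L_p}` for all `f ∈ L_p([0,1)²)`. -/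
theorem statement11 (p : ℝ) (hp : 1 < p) :
    ∃ c C : ℝ, 0 < c ∧ c ≤ C ∧ ∀ f : ℝ × ℝ → ℝ,
      MemLp f (ENNReal.ofReal p) (volume.restrict (Set.Icc (0 : ℝ × ℝ) 1)) →
      c * (∫ t in Set.Icc (0 : ℝ × ℝ) 1, |f t| ^ p) ^ (1 / p) ≤
          (∫ t in Set.Icc (0 : ℝ × ℝ) 1, sqFn f t ^ p) ^ (1 / p) ∧
      (∫ t in Set.Icc (0 : ℝ × ℝ) 1, sqFn f t ^ p) ^ (1 / p) ≤
          C * (∫ t in Set.Icc (0 : ℝ × ℝ) 1, |f t| ^ p) ^ (1 / p) := by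
  obtain ⟨c, C, hc, hcC, h⟩ := statement11_general (H := ℝ) p hp
  have : IsFiniteMeasure (volume.restrict (Set.Icc (0 : ℝ × ℝ) 1)) :=
    isFiniteMeasure_restrict.2 isCompact_Icc.measure_lt_top.ne
  exact ⟨c, C, hc, hcC, fun f hf => integral_sqFn_rpow_bounds_of_eLpNorm_eSqFn
    (zero_lt_one.trans hp) hc.le (hc.le.trans hcC) hf
    (h f (hf.integrable (ENNReal.one_le_ofReal.2 hp.le)))⟩
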